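/- arXiv:1707.02002 — 2 statements merged into one kernel-verified Lean document; each statement's English description precedes it below -/
import Mathlib

section
/- Let G be an n-vertex unicyclic graph with unique cycle C_l and branches T_1,…,T_l. Then the additive degree-Kirchhoff index satisfies Kf⁺(G) = 4·Kf(G) + 2·Σ_{i=1}^{l} D_{T_i}(v_i) − n(n−l). -/
open SimpleGraph Finset

attribute [local instance] Classical.propDecidable

variable {V : Type*}

/-- Degree of a vertex as a real number. -/
noncomputable def degR [Fintype V] (G : SimpleGraph V) (x : V) : ℝ :=
  ((Finset.univ.filter fun y => G.Adj x y).card : ℝ)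

/-- Number of edges of a graph. -/
noncomputable def esize (G : SimpleGraph V) : ℕ := Nat.card G.edgeSet

/-- Dirichlet energy of a potential. -/
noncomputable def energyFn [Fintype V] (G : SimpleGraph V) (φ : V → ℝ) : ℝ :=
  (1/2) * ∑ u, ∑ v, if G.Adj u v then (φ u - φ v)^2 else 0

/-- Effective resistance between two vertices (unit resistors on edges),
via the Dirichlet variational principle: the reciprocal of the minimal energy
of a potential with value 1 at `x` and 0 at `y`. -/
noncomputable def eres [Fintype V] (G : SimpleGraph V) (x y : V) : ℝ :=
  (sInf {e : ℝ | ∃ φ : V → ℝ, φ x = 1 ∧ φ y = 0 ∧ e = energyFn G φ})⁻¹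

/-- The transition matrix of the simple random walk, killed at `y`. -/
noncomputable def hitMat [Fintype V] (G : SimpleGraph V) (y : V) : Matrix V V ℝ :=
  Matrix.of fun u v => if v = y then 0 else if G.Adj u v then (degR G u)⁻¹ else 0

/-- Expected hitting time `H_{xy}` of the simple random walk from `x` to `y`,
expressed as the sum of the survival probabilities of the walk killed at `y`. -/
noncomputable def hitting [Fintype V] (G : SimpleGraph V) (x y : V) : ℝ :=
  if x = y then 0 else ∑' k : ℕ, ∑ z, (hitMat G y ^ k) x z

/-- Resistance-centrality `R(x)`. -/
noncomputable def Rres [Fintype V] (G : SimpleGraph V) (x : V) : ℝ := ∑ y, eres G x y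

/-- Weighted resistance-centrality `R^w(x)`. -/
noncomputable def Rw [Fintype V] (G : SimpleGraph V) (x : V) : ℝ :=
  ∑ y, degR G y * eres G x y

/-- Kirchhoff index `Kf(G)`. -/
noncomputable def Kf [Fintype V] (G : SimpleGraph V) : ℝ :=
  (1/2) * ∑ x, ∑ y, eres G x y

/-- Additive degree-Kirchhoff index `Kf⁺(G)`. -/
noncomputable def KfPlus [Fintype V] (G : SimpleGraph V) : ℝ :=
  (1/2) * ∑ x, ∑ y, (degR G x + degR G y) * eres G x y

/-- Multiplicative degree-Kirchhoff index `Kf*(G)`. -/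
noncomputable def KfStar [Fintype V] (G : SimpleGraph V) : ℝ :=
  (1/2) * ∑ x, ∑ y, degR G x * degR G y * eres G x y

/-- Cover cost `CC(x) = Σ_y H_{xy}`. -/
noncomputable def coverCost [Fintype V] (G : SimpleGraph V) (x : V) : ℝ :=
  ∑ y, hitting G x y

/-- Reverse cover cost `RC(x) = Σ_y H_{yx}`. -/
noncomputable def reverseCoverCost [Fintype V] (G : SimpleGraph V) (x : V) : ℝ :=
  ∑ y, hitting G y x

/-- Centrality (transmission) `D(x) = Σ_y d(x,y)`. -/
noncomputable def Dcent [Fintype V] (G : SimpleGraph V) (x : V) : ℝ :=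
  ∑ y, (G.dist x y : ℝ)

/-- Weighted centrality `D^w(x) = Σ_y deg(y)·d(x,y)`. -/
noncomputable def Dw [Fintype V] (G : SimpleGraph V) (x : V) : ℝ :=
  ∑ y, degR G y * (G.dist x y : ℝ)

/-- Wiener index `W(G)`. -/
noncomputable def Wiener [Fintype V] (G : SimpleGraph V) : ℝ :=
  (1/2) * ∑ x, ∑ y, (G.dist x y : ℝ)

/-- `D_{T}(v)`: sum of distances from `v` to the vertices of its connected
component in `G'` (used for the branch trees of a unicyclic graph). -/
noncomputable def branchD [Fintype V] (G' : SimpleGraph V) (v : V) : ℝ :=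
  ∑ u, if G'.Reachable v u then (G'.dist v u : ℝ) else 0

/-- The set of edges of the cycle `c 0 - c 1 - ⋯ - c (l-1) - c 0`. -/
def cycleEdges {l : ℕ} [NeZero l] (c : Fin l → V) : Set (Sym2 V) :=
  Set.range fun i : Fin l => s(c i, c (i + 1))

/-- Distance from a vertex to a set of vertices. -/
noncomputable def distToSet [Fintype V] (G : SimpleGraph V) (x : V) (s : Set V) : ℕ :=
  sInf {d | ∃ y ∈ s, G.dist x y = d}

/-- `v` is the center of a star. -/
def IsStarCenter (G : SimpleGraph V) (v : V) : Prop := ∀ u, u ≠ v → G.Adj v u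

/-- `G` is a star. -/
def IsStar (G : SimpleGraph V) : Prop := ∃ v, IsStarCenter G v

/-- The lollipop graph `P_n^l` : a cycle `C_l` on `0,…,l-1` together with a
path on `l,…,n-1` attached at the cycle vertex `0`. -/
def lollipop (n l : ℕ) : SimpleGraph (Fin n) :=
  SimpleGraph.fromRel (fun a b =>
    (a.val + 1 = b.val ∧ b.val < l) ∨ (a.val = 0 ∧ b.val = l - 1) ∨
    (a.val = 0 ∧ b.val = l) ∨ (l ≤ a.val ∧ a.val + 1 = b.val))

/-- The graph `S_n^l` : a cycle `C_l` on `0,…,l-1` with `n - l` pendant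
vertices `l,…,n-1` attached at the cycle vertex `0`. -/
def starCycle (n l : ℕ) : SimpleGraph (Fin n) :=
  SimpleGraph.fromRel (fun a b =>
    (a.val + 1 = b.val ∧ b.val < l) ∨ (a.val = 0 ∧ b.val = l - 1) ∨
    (a.val = 0 ∧ l ≤ b.val))

/-- The cycle graph `C_n` on `Fin n`. -/
def cycleG (n : ℕ) : SimpleGraph (Fin n) :=
  SimpleGraph.fromRel (fun a b => a.val + 1 = b.val ∨ (a.val = 0 ∧ b.val = n - 1))

/-!
For a fixed vertex `x`, the degree-weighted sum of the resistances `r(x, y)` is a sum over edges of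
`r(x, a) + r(x, b)`. Root the branches at the cycle. An edge off the cycle joins a non-root `u` to
its parent `p u` and is a bridge, so by the series law `r(x, p u) = r(x, u) + 1` if `x` is a
descendant of `u` and `r(x, p u) = r(x, u) - 1` otherwise. The number of non-roots `u` of which `x`
is a descendant is the height `h x` of `x` above the cycle, and the cycle edges count each cycle
vertex twice. Hence `∑ y, deg y * r(x, y) = 2 * ∑ y, r(x, y) - (n - l) + 2 * h x`. The heights in a
branch add up to its `D_T(v)`, so the sum over `x` is the formula.
-/

/-- The sum of `g` over the two orientations of an edge; it turns sums over ordered pairs of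
adjacent vertices into sums over edges. -/
def orientedSum {M : Type*} [AddCommMonoid M] (g : V → V → M) : Sym2 V → M :=
  Sym2.lift ⟨fun a b => g a b + g b a, fun _ _ => add_comm _ _⟩

@[simp]
lemma orientedSum_mk {M : Type*} [AddCommMonoid M] (g : V → V → M) (a b : V) :
    orientedSum g s(a, b) = g a b + g b a :=
  rfl

section EdgeSums

variable [Fintype V]

lemma sum_sum_adj_eq_sum_orientedSum {M : Type*} [AddCommMonoid M] (G : SimpleGraph V)
    (g : V → V → M) :
    ∑ a, ∑ b, (if G.Adj a b then g a b else 0) = ∑ e ∈ G.edgeFinset, orientedSum g e := by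
  rw [← Fintype.sum_prod_type' fun a b => if G.Adj a b then g a b else 0, ← Finset.sum_filter,
    ← Finset.sum_fiberwise_of_maps_to (t := G.edgeFinset) (g := fun d : V × V => s(d.1, d.2))
      (fun d hd => mem_edgeFinset.2 (G.mem_edgeSet.2 (Finset.mem_filter.1 hd).2))]
  refine Finset.sum_congr rfl fun e he => ?_
  induction e with | _ a b
  have hab : G.Adj a b := mem_edgeFinset.1 he
  have fiber : ({d ∈ {d : V × V | G.Adj d.1 d.2} | s(d.1, d.2) = s(a, b)} : Finset (V × V)) =
      {(a, b), (b, a)} := by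
    ext ⟨x, y⟩
    simp only [Finset.mem_filter, Finset.mem_univ, true_and, Sym2.eq_iff, Finset.mem_insert,
      Finset.mem_singleton, Prod.mk.injEq, and_iff_right_iff_imp]
    rintro (⟨rfl, rfl⟩ | ⟨rfl, rfl⟩)
    exacts [hab, hab.symm]
  rw [fiber, Finset.sum_pair (by simp [hab.ne]), orientedSum_mk]

lemma sum_degR_mul (G : SimpleGraph V) (f : V → ℝ) :
    ∑ y, degR G y * f y = ∑ e ∈ G.edgeFinset, orientedSum (fun a _ => f a) e := by
  rw [← sum_sum_adj_eq_sum_orientedSum]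
  refine Finset.sum_congr rfl fun y _ => ?_
  rw [degR, ← Finset.sum_filter, Finset.sum_const, nsmul_eq_mul]

end EdgeSums

section Energy

variable [Fintype V]

lemma two_mul_energyFn (G : SimpleGraph V) (φ : V → ℝ) :
    2 * energyFn G φ = ∑ e ∈ G.edgeFinset, orientedSum (fun a b => (φ a - φ b) ^ 2) e := by
  rw [← sum_sum_adj_eq_sum_orientedSum, energyFn]
  ring

lemma energyFn_nonneg (G : SimpleGraph V) (φ : V → ℝ) : 0 ≤ energyFn G φ :=
  mul_nonneg (by norm_num) <| Finset.sum_nonneg fun a _ => Finset.sum_nonneg fun b _ => by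
    split_ifs <;> positivity

lemma energyFn_mul_add (G : SimpleGraph V) (φ : V → ℝ) (k m : ℝ) :
    energyFn G (fun a => k * φ a + m) = k ^ 2 * energyFn G φ := by
  simp only [energyFn, Finset.mul_sum]
  refine Finset.sum_congr rfl fun a _ => Finset.sum_congr rfl fun b _ => ?_
  split_ifs <;> ring

lemma sq_sub_le_energyFn {G : SimpleGraph V} {u v : V} (h : G.Adj u v) (φ : V → ℝ) :
    (φ u - φ v) ^ 2 ≤ energyFn G φ := by
  have nonneg : ∀ e ∈ G.edgeFinset, 0 ≤ orientedSum (fun a b => (φ a - φ b) ^ 2) e := by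
    intro e _
    induction e with | _ a b
    rw [orientedSum_mk]
    positivity
  have := Finset.single_le_sum nonneg (mem_edgeFinset.2 (G.mem_edgeSet.2 h))
  rw [← two_mul_energyFn, orientedSum_mk] at this
  linarith [sub_sq_comm (φ u) (φ v)]

lemma abs_sub_le_length_mul_sqrt_energyFn {G : SimpleGraph V} {u v : V} (w : G.Walk u v)
    (φ : V → ℝ) : |φ u - φ v| ≤ w.length * √(energyFn G φ) := by
  induction w with
  | nil => simp
  | @cons a b d h w ih =>
    have hab : |φ a - φ b| ≤ √(energyFn G φ) := Real.abs_le_sqrt (sq_sub_le_energyFn h φ)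
    have htri := abs_sub_le (φ a) (φ b) (φ d)
    push_cast [Walk.length_cons]
    linarith

lemma sq_sub_le_length_sq_mul_energyFn {G : SimpleGraph V} {u v : V} (w : G.Walk u v)
    (φ : V → ℝ) : (φ u - φ v) ^ 2 ≤ w.length ^ 2 * energyFn G φ := by
  rw [← sq_abs, ← Real.sq_sqrt (energyFn_nonneg G φ), ← mul_pow]
  exact pow_le_pow_left₀ (abs_nonneg _) (abs_sub_le_length_mul_sqrt_energyFn w φ) 2

end Energy

section EffectiveResistance

variable [Fintype V]

/-- The energies of the potentials with value `1` at `x` and `0` at `y`. Their infimum, the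
effective conductance between `x` and `y`, is the reciprocal of `eres G x y`. -/
def unitEnergies (G : SimpleGraph V) (x y : V) : Set ℝ :=
  {e : ℝ | ∃ φ : V → ℝ, φ x = 1 ∧ φ y = 0 ∧ e = energyFn G φ}

lemma eres_eq_inv_sInf (G : SimpleGraph V) (x y : V) : eres G x y = (sInf (unitEnergies G x y))⁻¹ :=
  rfl

lemma unitEnergies_nonempty (G : SimpleGraph V) {x y : V} (hxy : x ≠ y) :
    (unitEnergies G x y).Nonempty :=
  ⟨_, Pi.single x 1, Pi.single_eq_same x 1, Pi.single_eq_of_ne hxy.symm 1, rfl⟩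

lemma nonneg_of_mem_unitEnergies {G : SimpleGraph V} {x y : V} {e : ℝ}
    (he : e ∈ unitEnergies G x y) : 0 ≤ e := by
  obtain ⟨φ, -, -, rfl⟩ := he
  exact energyFn_nonneg G φ

lemma unitEnergies_self (G : SimpleGraph V) (x : V) : unitEnergies G x x = ∅ := by
  refine Set.eq_empty_of_forall_notMem ?_
  rintro e ⟨φ, h1, h0, -⟩
  exact one_ne_zero (h1.symm.trans h0)

lemma unitEnergies_comm (G : SimpleGraph V) (x y : V) :
    unitEnergies G x y = unitEnergies G y x := by
  suffices h : ∀ x y, unitEnergies G x y ⊆ unitEnergies G y x from (h x y).antisymm (h y x)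
  rintro x y e ⟨φ, hx, hy, rfl⟩
  refine ⟨fun a => -1 * φ a + 1, by simp [hy], by simp [hx], ?_⟩
  rw [energyFn_mul_add]
  ring

lemma eres_self (G : SimpleGraph V) (x : V) : eres G x x = 0 := by
  simp [eres_eq_inv_sInf, unitEnergies_self]

lemma eres_comm (G : SimpleGraph V) (x y : V) : eres G x y = eres G y x := by
  rw [eres_eq_inv_sInf, unitEnergies_comm, eres_eq_inv_sInf]

lemma eres_nonneg (G : SimpleGraph V) (x y : V) : 0 ≤ eres G x y :=
  inv_nonneg.2 (Real.sInf_nonneg fun _ => nonneg_of_mem_unitEnergies)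

lemma forall_sq_sub_le_iff_inv_mem_lowerBounds {G : SimpleGraph V} {x y : V} {R : ℝ} (hR : 0 < R) :
    (∀ φ : V → ℝ, (φ x - φ y) ^ 2 ≤ R * energyFn G φ) ↔
      R⁻¹ ∈ lowerBounds (unitEnergies G x y) := by
  constructor
  · rintro h e ⟨φ, hx, hy, rfl⟩
    have := h φ
    rw [hx, hy, sub_zero, one_pow] at this
    rwa [inv_le_iff_one_le_mul₀' hR]
  · intro h φ
    by_cases hd : φ x - φ y = 0
    · rw [hd, zero_pow two_ne_zero]
      exact mul_nonneg hR.le (energyFn_nonneg G φ)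
    have normalized : energyFn G (fun a => (φ x - φ y)⁻¹ * φ a + -(φ x - φ y)⁻¹ * φ y) ∈
        unitEnergies G x y :=
      ⟨_, by rw [neg_mul, ← sub_eq_add_neg, ← mul_sub, inv_mul_cancel₀ hd], by ring, rfl⟩
    have hle := h normalized
    rw [energyFn_mul_add, inv_pow, le_inv_mul_iff₀ (by positivity), ← div_eq_mul_inv,
      div_le_iff₀ hR] at hle
    rwa [mul_comm]

lemma sInf_unitEnergies_pos {G : SimpleGraph V} {x y : V} (hxy : G.Reachable x y) (hne : x ≠ y) :
    0 < sInf (unitEnergies G x y) := by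
  obtain ⟨w⟩ := hxy
  have hw : 0 < w.length := Nat.pos_of_ne_zero fun h => hne (Walk.eq_of_length_eq_zero h)
  have hR : (0 : ℝ) < w.length ^ 2 := by positivity
  exact (inv_pos.2 hR).trans_le <| le_csInf (unitEnergies_nonempty G hne) <|
    (forall_sq_sub_le_iff_inv_mem_lowerBounds hR).1 (sq_sub_le_length_sq_mul_energyFn w)

theorem eres_le_iff {G : SimpleGraph V} {x y : V} (hxy : G.Reachable x y) {R : ℝ} (hR : 0 ≤ R) :
    eres G x y ≤ R ↔ ∀ φ : V → ℝ, (φ x - φ y) ^ 2 ≤ R * energyFn G φ := by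
  rcases eq_or_ne x y with rfl | hne
  · simpa [eres_self, hR] using fun φ => mul_nonneg hR (energyFn_nonneg G φ)
  have hpos := sInf_unitEnergies_pos hxy hne
  rcases hR.eq_or_lt with rfl | hR
  · refine iff_of_false (not_le.2 (inv_pos.2 hpos)) fun h => ?_
    have := h (Pi.single x 1)
    norm_num [Pi.single_eq_of_ne hne.symm] at this
  · rw [forall_sq_sub_le_iff_inv_mem_lowerBounds hR, eres_eq_inv_sInf, inv_le_comm₀ hpos hR]
    exact le_csInf_iff ⟨0, fun _ => nonneg_of_mem_unitEnergies⟩ (unitEnergies_nonempty G hne)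

lemma sq_sub_le_eres_mul_energyFn {G : SimpleGraph V} {x y : V} (hxy : G.Reachable x y)
    (φ : V → ℝ) : (φ x - φ y) ^ 2 ≤ eres G x y * energyFn G φ :=
  (eres_le_iff hxy (eres_nonneg G x y)).1 le_rfl φ

end EffectiveResistance

/-- The edge from `u ∈ A` to `v ∉ A` is the only edge of `G` between `A` and its complement. -/
structure IsBridgeCut (G : SimpleGraph V) (A : Set V) (u v : V) : Prop where
  mem : u ∈ A
  notMem : v ∉ A
  adj : G.Adj u v
  eq_of_adj : ∀ {a b}, a ∈ A → b ∉ A → G.Adj a b → a = u ∧ b = v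

namespace IsBridgeCut

variable {G : SimpleGraph V} {A : Set V} {u v x : V}

lemma compl (hA : IsBridgeCut G A u v) : IsBridgeCut G Aᶜ v u where
  mem := hA.notMem
  notMem := not_not.2 hA.mem
  adj := hA.adj.symm
  eq_of_adj ha hb hab := (hA.eq_of_adj (not_not.1 hb) ha hab.symm).symm

lemma mem_iff_mem_of_adj (hA : IsBridgeCut G A u v) {a b : V} (hab : G.Adj a b)
    (hne : s(a, b) ≠ s(u, v)) : a ∈ A ↔ b ∈ A := by
  refine ⟨fun ha => by_contra fun hb => hne ?_, fun hb => by_contra fun ha => hne ?_⟩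
  · obtain ⟨rfl, rfl⟩ := hA.eq_of_adj ha hb hab
    rfl
  · obtain ⟨rfl, rfl⟩ := hA.eq_of_adj hb ha hab.symm
    exact Sym2.eq_swap

variable [Fintype V]

lemma energyFn_add_indicator (hA : IsBridgeCut G A u v) (φ : V → ℝ) (t : ℝ) :
    energyFn G (φ + A.indicator fun _ => t) =
      energyFn G φ - (φ u - φ v) ^ 2 + (φ u + t - φ v) ^ 2 := by
  set ψ : V → ℝ := φ + A.indicator fun _ => t with hψ
  have huv : s(u, v) ∈ G.edgeFinset := mem_edgeFinset.2 hA.adj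
  have other_edges : ∀ e ∈ G.edgeFinset.erase s(u, v),
      orientedSum (fun a b => (ψ a - ψ b) ^ 2) e = orientedSum (fun a b => (φ a - φ b) ^ 2) e := by
    intro e he
    induction e with | _ a b
    obtain ⟨hne, hab⟩ := Finset.mem_erase.1 he
    rw [mem_edgeFinset, mem_edgeSet] at hab
    have same_side := hA.mem_iff_mem_of_adj hab hne
    have hdiff : ψ a - ψ b = φ a - φ b := by
      by_cases ha : a ∈ A
      · simp [hψ, ha, same_side.1 ha]
      · simp [hψ, ha, mt same_side.2 ha]
    simp only [orientedSum_mk, hdiff, sub_sq_comm (ψ b), sub_sq_comm (φ b)]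
  have hφ2 := two_mul_energyFn G φ
  have hψ2 := two_mul_energyFn G ψ
  rw [← Finset.add_sum_erase _ _ huv, orientedSum_mk] at hφ2 hψ2
  rw [Finset.sum_congr rfl other_edges] at hψ2
  have hu : ψ u = φ u + t := by simp [hψ, hA.mem]
  have hv : ψ v = φ v := by simp [hψ, hA.notMem]
  rw [hu, hv] at hψ2
  linarith [sub_sq_comm (φ u) (φ v), sub_sq_comm (φ u + t) (φ v)]

lemma eres_le_add_one (hA : IsBridgeCut G A u v) (hx : x ∉ A) (hxv : G.Reachable x v) :
    eres G x u ≤ eres G x v + 1 := by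
  set r := eres G x v
  have hr : 0 ≤ r := eres_nonneg G x v
  rw [eres_le_iff (hxv.trans hA.adj.symm.reachable) (by positivity)]
  intro φ
  -- Shifting `φ` on `A` by `φ v - φ u` removes the energy of the bridge.
  have henergy := hA.energyFn_add_indicator φ (φ v - φ u)
  have hres := sq_sub_le_eres_mul_energyFn hxv (φ + A.indicator fun _ => φ v - φ u)
  simp only [Pi.add_apply, Set.indicator_of_notMem hx, Set.indicator_of_notMem hA.notMem,
    add_zero] at hres
  set s := energyFn G (φ + A.indicator fun _ => φ v - φ u)
  have hs : 0 ≤ s := energyFn_nonneg G _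
  set p := φ x - φ v with hp
  set q := φ v - φ u with hq
  have cross : 2 * (p * q) ≤ r * q ^ 2 + s := by
    refine (le_abs_self _).trans (abs_le_of_sq_le_sq ?_ (by positivity))
    nlinarith [sq_nonneg (r * q ^ 2 - s), mul_le_mul_of_nonneg_right hres (sq_nonneg q)]
  calc (φ x - φ u) ^ 2 = p ^ 2 + 2 * (p * q) + q ^ 2 := by rw [hp, hq]; ring
    _ ≤ r * s + (r * q ^ 2 + s) + q ^ 2 := by gcongr
    _ = (r + 1) * (s + q ^ 2) := by ring
    _ = (r + 1) * energyFn G φ := by rw [henergy, hq]; ring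

lemma one_le_eres (hA : IsBridgeCut G A u v) (hx : x ∉ A) (hxv : G.Reachable x v) :
    1 ≤ eres G x u := by
  have henergy : energyFn G (A.indicator fun _ => (1 : ℝ)) = 1 := by
    have := hA.energyFn_add_indicator 0 1
    rw [zero_add] at this
    rw [this]
    simp [energyFn]
  have := sq_sub_le_eres_mul_energyFn (hxv.trans hA.adj.symm.reachable)
    (A.indicator fun _ => (1 : ℝ))
  simpa [hx, hA.mem, henergy] using this

lemma eres_add_one_le (hA : IsBridgeCut G A u v) (hx : x ∉ A) (hxv : G.Reachable x v) :
    eres G x v + 1 ≤ eres G x u := by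
  set R := eres G x u
  have hR : 1 ≤ R := hA.one_le_eres hx hxv
  rw [← le_sub_iff_add_le, eres_le_iff hxv (sub_nonneg.2 hR)]
  intro φ
  have shifted : ∀ t : ℝ, (φ x - φ v - t) ^ 2 ≤ R * (energyFn G φ + t ^ 2) := by
    intro t
    have hres := sq_sub_le_eres_mul_energyFn (hxv.trans hA.adj.symm.reachable)
      (φ + A.indicator fun _ => φ v - φ u + t)
    rw [hA.energyFn_add_indicator] at hres
    simp only [Pi.add_apply, Set.indicator_of_notMem hx, Set.indicator_of_mem hA.mem] at hres
    calc (φ x - φ v - t) ^ 2 = (φ x + 0 - (φ u + (φ v - φ u + t))) ^ 2 := by ring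
      _ ≤ R * (energyFn G φ - (φ u - φ v) ^ 2 + (φ u + (φ v - φ u + t) - φ v) ^ 2) := hres
      _ = R * (energyFn G φ - (φ u - φ v) ^ 2 + t ^ 2) := by ring
      _ ≤ R * (energyFn G φ + t ^ 2) := by
        gcongr
        exact sub_le_self _ (sq_nonneg _)
  have hdiscrim := discrim_le_zero (a := R - 1) (b := 2 * (φ x - φ v))
    (c := R * energyFn G φ - (φ x - φ v) ^ 2) fun t => by linarith [shifted t]
  rw [discrim] at hdiscrim
  have : R * (φ x - φ v) ^ 2 ≤ R * ((R - 1) * energyFn G φ) := by linarith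
  exact le_of_mul_le_mul_left this (by positivity)

theorem eres_eq_add_one (hA : IsBridgeCut G A u v) (hx : x ∉ A) (hxv : G.Reachable x v) :
    eres G x u = eres G x v + 1 :=
  (hA.eres_le_add_one hx hxv).antisymm (hA.eres_add_one_le hx hxv)

end IsBridgeCut

/-- A rooted forest structure on the vertices: `S` is the set of roots, `h` the height above the
roots and `p` the parent map. Roots are encoded as their own parents. -/
structure IsParentMap (S : Finset V) (h : V → ℕ) (p : V → V) : Prop where
  height_root : ∀ {x}, x ∈ S → h x = 0
  parent_root : ∀ {x}, x ∈ S → p x = x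
  height_parent : ∀ {x}, x ∉ S → h (p x) + 1 = h x

/-- The vertices whose chain of iterated parents under `p` passes through `u`, including `u`. -/
def descendants (p : V → V) (u : V) : Set V := {x | ∃ k, p^[k] x = u}

lemma mem_descendants_self (p : V → V) (u : V) : u ∈ descendants p u :=
  ⟨0, rfl⟩

lemma mem_descendants_iff {p : V → V} {u x : V} :
    x ∈ descendants p u ↔ x = u ∨ p x ∈ descendants p u := by
  constructor
  · rintro ⟨_ | k, hk⟩
    · exact Or.inl hk
    · exact Or.inr ⟨k, hk⟩
  · rintro (rfl | ⟨k, hk⟩)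
    · exact mem_descendants_self p x
    · exact ⟨k + 1, hk⟩

/-- The root of the tree containing `x`, when `h` is the height and `p` the parent map of a rooted
forest. -/
def rootOf (h : V → ℕ) (p : V → V) (x : V) : V := p^[h x] x

namespace IsParentMap

variable {S : Finset V} {h : V → ℕ} {p : V → V} {x u : V}

lemma mem_iff_height_eq_zero (hp : IsParentMap S h p) : x ∈ S ↔ h x = 0 :=
  ⟨hp.height_root, fun h0 => by_contra fun hx => by have := hp.height_parent hx; omega⟩

lemma induction (hp : IsParentMap S h p) {P : V → Prop} (root : ∀ x ∈ S, P x)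
    (child : ∀ x, x ∉ S → P (p x) → P x) (x : V) : P x := by
  induction hm : h x generalizing x with
  | zero => exact root x (hp.mem_iff_height_eq_zero.2 hm)
  | succ m ih =>
    have hx : x ∉ S := fun hx => by simp [hp.height_root hx] at hm
    exact child x hx (ih (p x) (by have := hp.height_parent hx; omega))

lemma injOn_parentEdge (hp : IsParentMap S h p) :
    Set.InjOn (fun x => s(x, p x)) (S : Set V)ᶜ := by
  intro x hx y hy hxy
  rcases Sym2.eq_iff.1 hxy with ⟨hxy, -⟩ | ⟨hxy, hyx⟩
  · exact hxy
  · have hx' := hp.height_parent hx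
    have hy' := hp.height_parent hy
    rw [hyx] at hx'
    rw [← hxy] at hy'
    omega

lemma notMem_descendants_of_mem (hp : IsParentMap S h p) (hu : u ∉ S) (hx : x ∈ S) :
    x ∉ descendants p u := by
  rintro ⟨k, hk⟩
  rw [Function.iterate_fixed (hp.parent_root hx)] at hk
  exact hu (hk ▸ hx)

lemma height_le_of_mem_descendants (hp : IsParentMap S h p) :
    x ∈ descendants p u → h u ≤ h x := by
  induction x using hp.induction with
  | root x hx =>
    rintro ⟨k, rfl⟩
    rw [Function.iterate_fixed (hp.parent_root hx)]
  | child x hx ih =>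
    rw [mem_descendants_iff]
    rintro (rfl | hpx)
    · exact le_rfl
    · exact (ih hpx).trans (by have := hp.height_parent hx; omega)

lemma parent_notMem_descendants (hp : IsParentMap S h p) (hu : u ∉ S) :
    p u ∉ descendants p u := fun hmem => by
  have := hp.height_le_of_mem_descendants hmem
  have := hp.height_parent hu
  omega

lemma card_filter_mem_descendants [Fintype V] (hp : IsParentMap S h p) (x : V) :
    #{u ∈ Sᶜ | x ∈ descendants p u} = h x := by
  induction x using hp.induction with
  | root x hx =>
    rw [hp.height_root hx, Finset.card_eq_zero, Finset.filter_eq_empty_iff]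
    exact fun u hu => hp.notMem_descendants_of_mem (Finset.mem_compl.1 hu) hx
  | child x hx ih =>
    have ancestors : ({u ∈ Sᶜ | x ∈ descendants p u} : Finset V) =
        insert x {u ∈ Sᶜ | p x ∈ descendants p u} := by
      ext u
      rw [Finset.mem_filter, mem_descendants_iff, eq_comm, and_or_left, Finset.mem_insert,
        Finset.mem_filter, and_iff_right_of_imp]
      rintro rfl
      exact Finset.mem_compl.2 hx
    rw [ancestors, Finset.card_insert_of_notMem (by simp [hp.parent_notMem_descendants hx]), ih,
      hp.height_parent hx]

lemma rootOf_of_mem (hp : IsParentMap S h p) (hx : x ∈ S) : rootOf h p x = x :=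
  Function.iterate_fixed (hp.parent_root hx) _

lemma rootOf_parent (hp : IsParentMap S h p) (x : V) : rootOf h p (p x) = rootOf h p x := by
  by_cases hx : x ∈ S
  · rw [hp.parent_root hx]
  · rw [rootOf, rootOf, ← hp.height_parent hx, Function.iterate_succ_apply]

lemma rootOf_mem (hp : IsParentMap S h p) (x : V) : rootOf h p x ∈ S := by
  induction x using hp.induction with
  | root x hx => rwa [hp.rootOf_of_mem hx]
  | child x _ ih => rwa [← hp.rootOf_parent]

end IsParentMap

section DistToSet

variable [Fintype V]

lemma distToSet_le (G : SimpleGraph V) (x : V) {y : V} {s : Set V} (hy : y ∈ s) :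
    distToSet G x s ≤ G.dist x y :=
  Nat.sInf_le ⟨y, hy, rfl⟩

lemma exists_mem_dist_eq_distToSet (G : SimpleGraph V) (x : V) {s : Set V} (hs : s.Nonempty) :
    ∃ y ∈ s, G.dist x y = distToSet G x s :=
  Nat.sInf_mem (s := {d | ∃ y ∈ s, G.dist x y = d}) (hs.elim fun y hy => ⟨_, y, hy, rfl⟩)

lemma distToSet_eq_zero_of_mem (G : SimpleGraph V) {x : V} {s : Set V} (hx : x ∈ s) :
    distToSet G x s = 0 :=
  Nat.le_zero.1 ((distToSet_le G x hx).trans_eq dist_self)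

lemma exists_adj_distToSet_add_one_eq {G : SimpleGraph V} (hG : G.Connected) {x : V} {s : Set V}
    (hs : s.Nonempty) (hx : x ∉ s) :
    ∃ y, G.Adj x y ∧ distToSet G y s + 1 = distToSet G x s := by
  obtain ⟨z, hz, hxz⟩ := exists_mem_dist_eq_distToSet G x hs
  obtain ⟨w, hw⟩ := hG.exists_walk_length_eq_dist x z
  cases w with
  | nil => exact absurd hz hx
  | @cons _ y _ hxy w =>
    refine ⟨y, hxy, le_antisymm ?_ ?_⟩
    · calc distToSet G y s + 1 ≤ w.length + 1 := by
            gcongr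
            exact (distToSet_le G y hz).trans (dist_le w)
        _ = distToSet G x s := by rw [← hxz, ← hw, Walk.length_cons]
    · obtain ⟨z', hz', hyz'⟩ := exists_mem_dist_eq_distToSet G y hs
      calc distToSet G x s ≤ G.dist x z' := distToSet_le G x hz'
        _ ≤ G.dist x y + G.dist y z' := hG.dist_triangle
        _ = distToSet G y s + 1 := by rw [dist_eq_one_iff_adj.2 hxy, hyz', add_comm]

end DistToSet

lemma exists_isParentMap [Finite V] {G : SimpleGraph V} (hG : G.Connected) {S : Finset V}
    (hS : S.Nonempty) : ∃ h p, IsParentMap S h p ∧ ∀ x ∉ S, G.Adj x (p x) := by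
  cases nonempty_fintype V
  choose! q hq using fun x (hx : x ∉ S) =>
    exists_adj_distToSet_add_one_eq hG (Finset.coe_nonempty.2 hS) (Finset.mem_coe.not.2 hx)
  refine ⟨fun x => distToSet G x S, fun x => if x ∈ S then x else q x, ⟨?_, ?_, ?_⟩, ?_⟩
  · exact fun hx => distToSet_eq_zero_of_mem G hx
  · exact fun hx => if_pos hx
  · exact fun hx => by simpa only [if_neg hx] using (hq _ hx).2
  · exact fun x hx => by simpa only [if_neg hx] using (hq x hx).1

/-- `F` is the forest with roots `S`, height `h` and parent map `p`: its edges are exactly those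
joining the non-roots to their parents. -/
structure IsRootedForest (F : SimpleGraph V) (S : Finset V) (h : V → ℕ) (p : V → V) : Prop extends
    IsParentMap S h p where
  edgeSet_eq : F.edgeSet = (fun x => s(x, p x)) '' (S : Set V)ᶜ

lemma IsParentMap.isRootedForest [Fintype V] {F : SimpleGraph V} {S : Finset V} {h : V → ℕ}
    {p : V → V} (hp : IsParentMap S h p) (hadj : ∀ x ∉ S, F.Adj x (p x))
    (hcard : F.edgeSet.ncard ≤ #Sᶜ) : IsRootedForest F S h p where
  toIsParentMap := hp
  edgeSet_eq := by
    refine (Set.eq_of_subset_of_ncard_le ?_ ?_).symm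
    · rintro _ ⟨x, hx, rfl⟩
      exact hadj x hx
    · rwa [hp.injOn_parentEdge.ncard_image, ← Finset.coe_compl, Set.ncard_coe_finset]

namespace IsRootedForest

variable {F G : SimpleGraph V} {S : Finset V} {h : V → ℕ} {p : V → V} {x y u : V}

lemma adj_iff (hF : IsRootedForest F S h p) :
    F.Adj x y ↔ (x ∉ S ∧ p x = y) ∨ (y ∉ S ∧ p y = x) := by
  rw [← mem_edgeSet, hF.edgeSet_eq]
  simp only [Set.mem_image, Set.mem_compl_iff, Finset.mem_coe, Sym2.eq_iff]
  constructor
  · rintro ⟨z, hz, ⟨rfl, rfl⟩ | ⟨rfl, rfl⟩⟩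
    exacts [Or.inl ⟨hz, rfl⟩, Or.inr ⟨hz, rfl⟩]
  · rintro (⟨hx, rfl⟩ | ⟨hy, rfl⟩)
    exacts [⟨x, hx, Or.inl ⟨rfl, rfl⟩⟩, ⟨y, hy, Or.inr ⟨rfl, rfl⟩⟩]

lemma adj_parent (hF : IsRootedForest F S h p) (hx : x ∉ S) : F.Adj x (p x) :=
  hF.adj_iff.2 (Or.inl ⟨hx, rfl⟩)

lemma rootOf_eq_of_adj (hF : IsRootedForest F S h p) (hxy : F.Adj x y) :
    rootOf h p x = rootOf h p y := by
  rcases hF.adj_iff.1 hxy with ⟨-, rfl⟩ | ⟨-, rfl⟩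
  exacts [(hF.rootOf_parent x).symm, hF.rootOf_parent y]

lemma rootOf_eq_of_reachable (hF : IsRootedForest F S h p) (hxy : F.Reachable x y) :
    rootOf h p x = rootOf h p y := by
  obtain ⟨w⟩ := hxy
  induction w with
  | nil => rfl
  | cons hab _ ih => exact (hF.rootOf_eq_of_adj hab).trans ih

lemma height_le_height_add_length (hF : IsRootedForest F S h p) (w : F.Walk x y) :
    h y ≤ h x + w.length := by
  induction w with
  | nil => simp
  | @cons a b _ hab w ih =>
    rw [Walk.length_cons]
    rcases hF.adj_iff.1 hab with ⟨ha, rfl⟩ | ⟨hb, rfl⟩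
    · have := hF.height_parent ha
      omega
    · have := hF.height_parent hb
      omega

lemma exists_walk_rootOf_length_eq_height (hF : IsRootedForest F S h p) (x : V) :
    ∃ w : F.Walk (rootOf h p x) x, w.length = h x := by
  induction x using hF.induction with
  | root x hx =>
    rw [hF.rootOf_of_mem hx, hF.height_root hx]
    exact ⟨.nil, rfl⟩
  | child x hx ih =>
    rw [hF.rootOf_parent] at ih
    obtain ⟨w, hw⟩ := ih
    exact ⟨w.concat (hF.adj_parent hx).symm, by rw [Walk.length_concat, hw, hF.height_parent hx]⟩

lemma reachable_iff_eq_rootOf (hF : IsRootedForest F S h p) (hy : y ∈ S) :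
    F.Reachable y x ↔ y = rootOf h p x := by
  constructor
  · intro hyx
    rw [← hF.rootOf_eq_of_reachable hyx, hF.rootOf_of_mem hy]
  · rintro rfl
    exact (hF.exists_walk_rootOf_length_eq_height x).nonempty

lemma dist_rootOf (hF : IsRootedForest F S h p) (x : V) : F.dist (rootOf h p x) x = h x := by
  obtain ⟨w, hw⟩ := hF.exists_walk_rootOf_length_eq_height x
  obtain ⟨w', hw'⟩ := w.reachable.exists_walk_length_eq_dist
  refine le_antisymm (hw ▸ dist_le w) ?_
  have := hF.height_le_height_add_length w'
  rwa [hF.height_root (hF.rootOf_mem x), zero_add, hw'] at this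

lemma isBridgeCut_descendants (hF : IsRootedForest F S h p) (hFG : F ≤ G)
    (hcore : ∀ a b, G.Adj a b → ¬F.Adj a b → a ∈ S) (hu : u ∉ S) :
    IsBridgeCut G (descendants p u) u (p u) where
  mem := mem_descendants_self p u
  notMem := hF.parent_notMem_descendants hu
  adj := hFG (hF.adj_parent hu)
  eq_of_adj {a b} ha hb hab := by
    have habF : F.Adj a b :=
      not_not.1 fun hn => hF.notMem_descendants_of_mem hu (hcore a b hab hn) ha
    rcases hF.adj_iff.1 habF with ⟨-, rfl⟩ | ⟨-, rfl⟩
    · have hau : a = u := (mem_descendants_iff.1 ha).resolve_right hb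
      exact ⟨hau, congrArg p hau⟩
    · exact absurd (mem_descendants_iff.2 (Or.inr ha)) hb

variable [Fintype V]

theorem sum_branchD (hF : IsRootedForest F S h p) : ∑ y ∈ S, branchD F y = ∑ x, (h x : ℝ) := by
  simp only [branchD]
  rw [Finset.sum_comm]
  refine Finset.sum_congr rfl fun x _ => ?_
  calc ∑ y ∈ S, (if F.Reachable y x then (F.dist y x : ℝ) else 0)
      = ∑ y ∈ S, if y = rootOf h p x then (F.dist y x : ℝ) else 0 :=
        Finset.sum_congr rfl fun y hy => by simp only [hF.reachable_iff_eq_rootOf hy]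
    _ = h x := by rw [Finset.sum_ite_eq_of_mem' _ _ _ (hF.rootOf_mem x), hF.dist_rootOf]

lemma sum_degR_mul (hF : IsRootedForest F S h p) (f : V → ℝ) :
    ∑ y, degR F y * f y = ∑ u ∈ Sᶜ, (f u + f (p u)) := by
  have parent_edges : F.edgeFinset = Sᶜ.image fun u => s(u, p u) := by
    rw [← Finset.coe_inj, coe_edgeFinset, hF.edgeSet_eq, Finset.coe_image,
      Finset.coe_compl]
  rw [_root_.sum_degR_mul, parent_edges, Finset.sum_image (by simpa using hF.injOn_parentEdge)]
  rfl

lemma eres_parent (hF : IsRootedForest F S h p) (hFG : F ≤ G)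
    (hcore : ∀ a b, G.Adj a b → ¬F.Adj a b → a ∈ S) (hG : G.Connected) (hu : u ∉ S) (x : V) :
    eres G x (p u) = eres G x u - 1 + 2 * (if x ∈ descendants p u then 1 else 0) := by
  have hcut := hF.isBridgeCut_descendants hFG hcore hu
  by_cases hx : x ∈ descendants p u
  · rw [hcut.compl.eres_eq_add_one (not_not.2 hx) (hG x u), if_pos hx]
    ring
  · rw [hcut.eres_eq_add_one hx (hG x (p u)), if_neg hx]
    ring

theorem sum_degR_mul_eres (hF : IsRootedForest F S h p) (hFG : F ≤ G)
    (hcore : ∀ a b, G.Adj a b → ¬F.Adj a b → a ∈ S) (hG : G.Connected) (x : V) :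
    ∑ y, degR F y * eres G x y = 2 * ∑ u ∈ Sᶜ, eres G x u - #Sᶜ + 2 * h x := by
  calc ∑ y, degR F y * eres G x y
      = ∑ u ∈ Sᶜ, (2 * eres G x u - 1 + 2 * (if x ∈ descendants p u then (1 : ℝ) else 0)) := by
        rw [hF.sum_degR_mul]
        refine Finset.sum_congr rfl fun u hu => ?_
        rw [hF.eres_parent hFG hcore hG (Finset.mem_compl.1 hu)]
        ring
    _ = 2 * ∑ u ∈ Sᶜ, eres G x u - #Sᶜ + 2 * #{u ∈ Sᶜ | x ∈ descendants p u} := by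
        rw [Finset.sum_add_distrib, Finset.sum_sub_distrib, ← Finset.mul_sum, ← Finset.mul_sum,
          Finset.sum_boole, Finset.sum_const, nsmul_one]
    _ = 2 * ∑ u ∈ Sᶜ, eres G x u - #Sᶜ + 2 * h x := by rw [hF.card_filter_mem_descendants]

end IsRootedForest

section Cycle

variable {l : ℕ} [NeZero l] {c : Fin l → V} {G : SimpleGraph V}

lemma mem_range_of_mem_cycleEdges {a b : V} (hab : s(a, b) ∈ cycleEdges c) : a ∈ Set.range c := by
  obtain ⟨i, hi⟩ := hab
  rcases Sym2.eq_iff.1 hi with ⟨rfl, -⟩ | ⟨-, rfl⟩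
  exacts [⟨i, rfl⟩, ⟨i + 1, rfl⟩]

lemma cycleEdge_injective (hl : 3 ≤ l) (hc : Function.Injective c) :
    Function.Injective fun i : Fin l => s(c i, c (i + 1)) := by
  intro i j hij
  rcases Sym2.eq_iff.1 hij with ⟨hij, -⟩ | ⟨hij, hji⟩
  · exact hc hij
  · have two_eq_zero : (1 + 1 : Fin l) = 0 := by
      rw [← add_eq_left (a := j), ← add_assoc, ← hc hij, hc hji]
    have := congrArg Fin.val two_eq_zero
    rw [Fin.val_add, Fin.val_one', Fin.val_zero, Nat.mod_eq_of_lt (by omega : 1 < l),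
      Nat.mod_eq_of_lt (by omega : 1 + 1 < l)] at this
    omega

lemma ncard_cycleEdges (hl : 3 ≤ l) (hc : Function.Injective c) : (cycleEdges c).ncard = l := by
  rw [cycleEdges, Set.ncard_range_of_injective (cycleEdge_injective hl hc), Nat.card_fin]

lemma cycleEdges_subset_edgeSet (hadj : ∀ i : Fin l, G.Adj (c i) (c (i + 1))) :
    cycleEdges c ⊆ G.edgeSet := by
  rintro _ ⟨i, rfl⟩
  exact hadj i

variable [Fintype V]

lemma sum_degR_mul_eq_deleteEdges_cycleEdges (hl : 3 ≤ l) (hc : Function.Injective c)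
    (hadj : ∀ i : Fin l, G.Adj (c i) (c (i + 1))) (f : V → ℝ) :
    ∑ y, degR G y * f y =
      ∑ y, degR (G.deleteEdges (cycleEdges c)) y * f y + 2 * ∑ i, f (c i) := by
  generalize hF : G.deleteEdges (cycleEdges c) = F
  set C : Finset (Sym2 V) := univ.image fun i : Fin l => s(c i, c (i + 1)) with hC
  have hCcoe : (C : Set (Sym2 V)) = cycleEdges c := by
    rw [hC, Finset.coe_image, Finset.coe_univ, Set.image_univ, cycleEdges]
  have hsplit : G.edgeFinset = F.edgeFinset ∪ C := by
    rw [← Finset.coe_inj, Finset.coe_union, coe_edgeFinset, coe_edgeFinset, hCcoe, ← hF,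
      edgeSet_deleteEdges, Set.sdiff_union_of_subset (cycleEdges_subset_edgeSet hadj)]
  have hdisj : Disjoint F.edgeFinset C := by
    rw [← Finset.disjoint_coe, coe_edgeFinset, hCcoe, ← hF, edgeSet_deleteEdges]
    exact Set.disjoint_sdiff_left
  have hshift : ∑ i : Fin l, f (c (i + 1)) = ∑ i, f (c i) :=
    Equiv.sum_comp (Equiv.addRight (1 : Fin l)) fun i => f (c i)
  rw [sum_degR_mul, sum_degR_mul, hsplit, Finset.sum_union hdisj,
    Finset.sum_image (cycleEdge_injective hl hc).injOn]
  simp only [orientedSum_mk, Finset.sum_add_distrib, hshift]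
  ring

theorem exists_isRootedForest_deleteEdges_cycleEdges (hG : G.Connected)
    (huni : esize G = Fintype.card V) (hl : 3 ≤ l) (hc : Function.Injective c)
    (hadj : ∀ i : Fin l, G.Adj (c i) (c (i + 1))) :
    ∃ h p, IsRootedForest (G.deleteEdges (cycleEdges c)) (univ.map ⟨c, hc⟩) h p := by
  obtain ⟨h, p, hp, hpG⟩ := exists_isParentMap hG (S := univ.map ⟨c, hc⟩) (by simp)
  refine ⟨h, p, hp.isRootedForest (fun x hx => ?_) (le_of_eq ?_)⟩
  · refine deleteEdges_adj.2 ⟨hpG x hx, fun hcyc => hx ?_⟩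
    simpa using mem_range_of_mem_cycleEdges hcyc
  · rw [edgeSet_deleteEdges, Set.ncard_sdiff (cycleEdges_subset_edgeSet hadj),
      ncard_cycleEdges hl hc, Finset.card_compl, Finset.card_map, Finset.card_fin, ← huni]
    rfl

theorem rw_eq_of_isRootedForest_deleteEdges_cycleEdges {h : V → ℕ} {p : V → V}
    (hG : G.Connected) (hl : 3 ≤ l) (hc : Function.Injective c)
    (hadj : ∀ i : Fin l, G.Adj (c i) (c (i + 1)))
    (hF : IsRootedForest (G.deleteEdges (cycleEdges c)) (univ.map ⟨c, hc⟩) h p) (x : V) :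
    Rw G x = 2 * Rres G x - ((Fintype.card V : ℝ) - l) + 2 * h x := by
  set S : Finset V := univ.map ⟨c, hc⟩ with hS
  have hcore : ∀ a b, G.Adj a b → ¬(G.deleteEdges (cycleEdges c)).Adj a b → a ∈ S := by
    intro a b hab hcyc
    rw [deleteEdges_adj, not_and, not_not] at hcyc
    simpa [hS] using mem_range_of_mem_cycleEdges (hcyc hab)
  have hcycle : ∑ i, eres G x (c i) = ∑ y ∈ S, eres G x y := by rw [hS, Finset.sum_map]; rfl
  have hcard : (#Sᶜ : ℝ) = Fintype.card V - l := by
    rw [eq_sub_iff_add_eq, ← Finset.card_compl_add_card S, hS, Finset.card_map, Finset.card_fin]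
    push_cast
    rfl
  rw [Rw, Rres, sum_degR_mul_eq_deleteEdges_cycleEdges hl hc hadj,
    hF.sum_degR_mul_eres (deleteEdges_le _) hcore hG, hcycle, hcard,
    ← Finset.sum_add_sum_compl S fun y => eres G x y]
  ring

end Cycle

lemma kfPlus_eq_sum_rw [Fintype V] (G : SimpleGraph V) : KfPlus G = ∑ x, Rw G x := by
  have hswap : ∑ x, ∑ y, degR G x * eres G x y = ∑ x, ∑ y, degR G y * eres G x y := by
    rw [Finset.sum_comm]
    simp only [eres_comm G]
  simp only [KfPlus, Rw, add_mul, Finset.sum_add_distrib, hswap]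
  ring

/-- For an `n`-vertex unicyclic graph `G`,
`Kf⁺(G) = 4·Kf(G) + 2·Σ_{i=1}^{l} D_{T_i}(v_i) − n(n−l)`. -/
theorem kfPlus_formula [Fintype V] (G : SimpleGraph V) (n l : ℕ) [NeZero l]
    (hn : Fintype.card V = n) (hconn : G.Connected) (huni : esize G = n)
    (hl : 3 ≤ l) (c : Fin l → V) (hinj : Function.Injective c)
    (hadj : ∀ i : Fin l, G.Adj (c i) (c (i + 1))) :
    KfPlus G = 4 * Kf G
      + 2 * (∑ i : Fin l, branchD (G.deleteEdges (cycleEdges c)) (c i))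
      - (n : ℝ) * ((n : ℝ) - l) := by
  subst hn
  obtain ⟨h, p, hF⟩ := exists_isRootedForest_deleteEdges_cycleEdges hconn huni hl hinj hadj
  have hbranch : ∑ i, branchD (G.deleteEdges (cycleEdges c)) (c i) = ∑ x, (h x : ℝ) := by
    rw [← hF.sum_branchD, Finset.sum_map]
    rfl
  calc KfPlus G
      = ∑ x, Rw G x := kfPlus_eq_sum_rw G
    _ = ∑ x, (2 * Rres G x - ((Fintype.card V : ℝ) - l) + 2 * h x) :=
        Finset.sum_congr rfl fun x _ =>
          rw_eq_of_isRootedForest_deleteEdges_cycleEdges hconn hl hinj hadj hF x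
    _ = 4 * Kf G + 2 * ∑ x, (h x : ℝ) - Fintype.card V * ((Fintype.card V : ℝ) - l) := by
        simp only [Kf, Rres, Finset.sum_add_distrib, Finset.sum_sub_distrib, ← Finset.mul_sum,
          Finset.sum_const, Finset.card_univ, nsmul_eq_mul]
        ring
    _ = _ := by rw [hbranch]
end

section
/- Let G be an n-vertex unicyclic graph whose unique cycle has length l, and let x be any vertex of G. Then CC(x) ≤ l³/2 − (4n+3)l²/6 + n(2n²+3n−1)/6, with equality if and only if G is the lollipop graph P_n^l (a cycle C_l with a path P_{n−l+1} attached by identifying an endpoint with a cycle vertex) and x lies on the cycle. -/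
open SimpleGraph Finset

attribute [local instance] Classical.propDecidable

variable {V : Type*}

/-!
If `r(·, y)` satisfies `L r(·, y) = τ - 2 δ_y` for the Laplacian `L`, with `τ` independent of `y`,
and `L h = 2 - deg`, then all hitting times can be read off the harmonic equations and
`CC(x) = ∑ r(y, z) + ∑ h(y) - n h(x)`, the sums being over all vertices. In a unicyclic graph the
effective resistance `r` and the distance `h` to the cycle are such functions: this holds on the
cycle and survives the attachment of a leaf.

So the vertices of the cycle are exactly those of maximal cover cost. Building the graph leaf by
leaf, both sums are largest when each new leaf is attached as far out as possible, and `∑ h`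
determines this choice, so that equality forces a lollipop. Conversely, if `G` is a lollipop, some
vertex attains the bound, and hence so do all vertices of the cycle, whichever cycle was given.
-/

open scoped Matrix

/-! ### Hitting times and cover cost -/

section HittingTime

-- Since `1 = g - Q g`, the row sums of `Q ^ k` telescope.
lemma hasSum_sum_pow_of_eq_one_add_mulVec [Fintype V] {Q : Matrix V V ℝ} {g : V → ℝ}
    (hQ : ∀ u v, 0 ≤ Q u v) (hg_nonneg : ∀ u, 0 ≤ g u) (hg : ∀ u, g u = 1 + (Q *ᵥ g) u)
    (x : V) : HasSum (fun k : ℕ => ∑ z, (Q ^ k) x z) (g x) := by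
  have pow_nonneg (k : ℕ) : ∀ u v, 0 ≤ (Q ^ k) u v := by
    induction k with
    | zero => intro u v; rw [pow_zero, Matrix.one_apply]; positivity
    | succ k ih =>
      intro u v
      rw [pow_succ, Matrix.mul_apply]
      exact sum_nonneg fun w _ => mul_nonneg (ih u w) (hQ w v)
  have rowSum_nonneg (k : ℕ) : 0 ≤ ∑ z, (Q ^ k) x z := sum_nonneg fun z _ => pow_nonneg k x z
  have remainder_nonneg (k : ℕ) : 0 ≤ (Q ^ k *ᵥ g) x :=
    sum_nonneg fun z _ => mul_nonneg (pow_nonneg k x z) (hg_nonneg z)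
  have rowSum_eq (k : ℕ) : ∑ z, (Q ^ k) x z = (Q ^ k *ᵥ g) x - (Q ^ (k + 1) *ᵥ g) x := by
    have one_eq : (1 : V → ℝ) = g - Q *ᵥ g := by
      ext u; simp only [Pi.one_apply, Pi.sub_apply]; linarith [hg u]
    rw [pow_succ, ← Matrix.mulVec_mulVec, ← Pi.sub_apply, ← Matrix.mulVec_sub, ← one_eq]
    simp [Matrix.mulVec, dotProduct]
  have partialSum_eq (N : ℕ) : ∑ k ∈ range N, ∑ z, (Q ^ k) x z = g x - (Q ^ N *ᵥ g) x := by
    simp_rw [rowSum_eq]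
    rw [sum_range_sub', pow_zero, Matrix.one_mulVec]
  have summable_rowSum : Summable fun k : ℕ => ∑ z, (Q ^ k) x z :=
    summable_of_sum_range_le rowSum_nonneg (c := g x) fun N => by
      linarith [partialSum_eq N, remainder_nonneg N]
  have remainder_le (N : ℕ) : (Q ^ N *ᵥ g) x ≤ (∑ z, (Q ^ N) x z) * ∑ z, g z := by
    rw [sum_mul]
    exact sum_le_sum fun z _ => mul_le_mul_of_nonneg_left
      (single_le_sum (fun w _ => hg_nonneg w) (mem_univ z)) (pow_nonneg N x z)
  have remainder_tendsto : Filter.Tendsto (fun N : ℕ => (Q ^ N *ᵥ g) x) .atTop (nhds 0) :=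
    squeeze_zero remainder_nonneg remainder_le <| by
      simpa using summable_rowSum.tendsto_atTop_zero.mul_const (∑ z, g z)
  rw [hasSum_iff_tendsto_nat_of_nonneg rowSum_nonneg]
  simpa [partialSum_eq] using remainder_tendsto.const_sub (g x)

lemma degR_eq_degree [Fintype V] (G : SimpleGraph V) [DecidableRel G.Adj] (u : V) :
    degR G u = G.degree u := by
  rw [degR, ← G.card_neighborFinset_eq_degree, G.neighborFinset_eq_filter]
  congr!

lemma lapMatrix_mulVec_eq_sum_ite [Fintype V] [DecidableEq V] (G : SimpleGraph V)
    [DecidableRel G.Adj] (f : V → ℝ) (u : V) :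
    (G.lapMatrix ℝ *ᵥ f) u = ∑ v, if G.Adj u v then f u - f v else 0 := by
  rw [lapMatrix_mulVec_apply, ← sum_filter, ← G.neighborFinset_eq_filter, sum_sub_distrib,
    sum_const, G.card_neighborFinset_eq_degree, nsmul_eq_mul]

lemma le_of_lapMatrix_mulVec_pos [Fintype V] [DecidableEq V] (G : SimpleGraph V)
    [DecidableRel G.Adj] {f : V → ℝ} {y : V}
    (hf : ∀ u, u ≠ y → 0 < (G.lapMatrix ℝ *ᵥ f) u) (x : V) : f y ≤ f x := by
  obtain ⟨m, -, hm⟩ := exists_min_image univ f ⟨y, mem_univ y⟩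
  obtain rfl : m = y := by
    by_contra hmy
    refine (hf m hmy).not_ge ?_
    rw [lapMatrix_mulVec_eq_sum_ite]
    refine sum_nonpos fun v _ => ?_
    split_ifs
    · linarith [hm v (mem_univ v)]
    · exact le_rfl
  exact hm x (mem_univ x)

lemma hitMat_nonneg [Fintype V] (G : SimpleGraph V) (y u v : V) : 0 ≤ hitMat G y u v := by
  simp only [hitMat, degR, Matrix.of_apply]
  positivity

lemma hitMat_mulVec_apply [Fintype V] (G : SimpleGraph V) [DecidableRel G.Adj] {f : V → ℝ}
    {y : V} (hy : f y = 0) (u : V) :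
    (hitMat G y *ᵥ f) u = (degR G u)⁻¹ * ∑ v ∈ G.neighborFinset u, f v := by
  rw [G.neighborFinset_eq_filter, sum_filter, mul_sum]
  refine sum_congr rfl fun v _ => ?_
  by_cases hv : v = y <;> simp [hitMat, hv, hy]

lemma eq_one_add_hitMat_mulVec [Fintype V] [DecidableEq V] (G : SimpleGraph V)
    [DecidableRel G.Adj] {f : V → ℝ} {y u : V}
    (hy : f y = 0) (hdeg : 0 < degR G u) (hf : (G.lapMatrix ℝ *ᵥ f) u = degR G u) :
    f u = 1 + (hitMat G y *ᵥ f) u := by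
  rw [lapMatrix_mulVec_apply, ← degR_eq_degree] at hf
  rw [hitMat_mulVec_apply G hy]
  field_simp
  linarith

theorem hitting_eq_of_lapMatrix_mulVec [Fintype V] [DecidableEq V] (G : SimpleGraph V)
    [DecidableRel G.Adj] (hdeg : ∀ u, 0 < degR G u) {f : V → ℝ} {y : V} (hy : f y = 0)
    (hf : ∀ u, u ≠ y → (G.lapMatrix ℝ *ᵥ f) u = degR G u) (x : V) : hitting G x y = f x := by
  rw [hitting]
  split_ifs with hxy
  · rw [hxy, hy]
  -- The row of `hitMat G y` at `y` is not zero, so `f` must be corrected there.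
  let g : V → ℝ := fun u => 1 + (hitMat G y *ᵥ f) u
  have hgf {u : V} (hu : u ≠ y) : g u = f u :=
    (eq_one_add_hitMat_mulVec G hy (hdeg u) (hf u hu)).symm
  have hg (u : V) : g u = 1 + (hitMat G y *ᵥ g) u := by
    refine congrArg (1 + ·) (sum_congr rfl fun v _ => ?_)
    by_cases hv : v = y
    · simp [hitMat, hv]
    · rw [hgf hv]
  have hf_nonneg (u : V) : 0 ≤ f u :=
    hy ▸ le_of_lapMatrix_mulVec_pos G (fun v hv => hf v hv ▸ hdeg v) u
  have hg_nonneg (u : V) : 0 ≤ g u :=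
    add_nonneg zero_le_one
      (sum_nonneg fun v _ => mul_nonneg (hitMat_nonneg G y u v) (hf_nonneg v))
  rw [(hasSum_sum_pow_of_eq_one_add_mulVec (hitMat_nonneg G y) hg_nonneg hg x).tsum_eq, hgf hxy]

end HittingTime

section CoverCost

variable [Fintype V] [DecidableEq V] (G : SimpleGraph V) [DecidableRel G.Adj]
  (hdeg : ∀ u, 0 < degR G u)
  {r : V → V → ℝ} {τ h : V → ℝ} (hr_self : ∀ y, r y y = 0)
  (hr : ∀ y u, (G.lapMatrix ℝ *ᵥ fun v => r v y) u = τ u - if u = y then 2 else 0)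
  (hh : ∀ u, (G.lapMatrix ℝ *ᵥ h) u = 2 - degR G u)

include hdeg hr_self hr hh

-- A potential `h` as in `hh` exists only if `|E| = |V|`; `r` plays the role of the resistance.
theorem hitting_eq_of_resistance (x y : V) :
    hitting G x y = Fintype.card V * r x y + ∑ z, r y z - ∑ z, r x z + h y - h x := by
  let f : V → ℝ := fun v => Fintype.card V * r v y + ∑ z, r y z - ∑ z, r v z + h y - h v
  have lap_f (u : V) : (G.lapMatrix ℝ *ᵥ f) u =
      Fintype.card V * (G.lapMatrix ℝ *ᵥ fun v => r v y) u -
        ∑ z, (G.lapMatrix ℝ *ᵥ fun v => r v z) u - (G.lapMatrix ℝ *ᵥ h) u := by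
    simp only [lapMatrix_mulVec_eq_sum_ite]
    rw [sum_comm, mul_sum, ← sum_sub_distrib, ← sum_sub_distrib]
    refine sum_congr rfl fun v _ => ?_
    split_ifs
    · simp only [f, sum_sub_distrib]; ring
    · simp
  refine hitting_eq_of_lapMatrix_mulVec G hdeg (f := f) (by simp [f, hr_self]) (fun u hu => ?_) x
  rw [lap_f, hr, hh, if_neg hu]
  simp only [hr, sum_sub_distrib, sum_const, card_univ, nsmul_eq_mul, sum_ite_eq, mem_univ, if_true]
  ring

theorem coverCost_eq_of_resistance (x : V) :
    coverCost G x = ∑ y, ∑ z, r y z + ∑ y, h y - Fintype.card V * h x := by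
  simp only [coverCost, hitting_eq_of_resistance G hdeg hr_self hr hh, sum_add_distrib,
    sum_sub_distrib, ← mul_sum, sum_const, card_univ, nsmul_eq_mul]
  ring

end CoverCost

lemma hitMat_submatrix_iso {W : Type*} [Fintype V] [Fintype W] {G : SimpleGraph V}
    {G' : SimpleGraph W} (φ : G ≃g G') (y : V) :
    (hitMat G' (φ y)).submatrix φ φ = hitMat G y := by
  ext u v
  simp only [hitMat, degR_eq_degree, Matrix.submatrix_apply, Matrix.of_apply,
    EmbeddingLike.apply_eq_iff_eq, φ.map_adj_iff, φ.degree_eq]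

theorem coverCost_map_iso {W : Type*} [Fintype V] [Fintype W] {G : SimpleGraph V}
    {G' : SimpleGraph W} (φ : G ≃g G') (x : V) : coverCost G' (φ x) = coverCost G x := by
  have pow_apply (y : V) (k : ℕ) (u v : V) :
      (hitMat G' (φ y) ^ k) (φ u) (φ v) = (hitMat G y ^ k) u v := by
    have := congrArg (fun M => M u v)
      (map_pow (Matrix.reindexAlgEquiv ℝ ℝ φ.symm.toEquiv) (hitMat G' (φ y)) k)
    simpa [Matrix.reindex_apply, ← hitMat_submatrix_iso φ y] using! this
  have hitting_apply (y : V) : hitting G' (φ x) (φ y) = hitting G x y := by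
    simp only [hitting, EmbeddingLike.apply_eq_iff_eq, ← pow_apply y]
    simp only [← φ.toEquiv.sum_comp, RelIso.coe_fn_toEquiv]
  simp only [coverCost, ← hitting_apply]
  exact (φ.toEquiv.sum_comp _).symm

/-! ### Isomorphisms and enumerations -/

lemma exists_iso_of_bijective_of_card_edgeSet_le {W : Type*} {H : SimpleGraph W}
    {G : SimpleGraph V} [Finite G.edgeSet] (f : H →g G) (hf : Function.Bijective f)
    (hcard : Nat.card G.edgeSet ≤ Nat.card H.edgeSet) : ∃ φ : H ≃g G, ∀ w, φ w = f w := by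
  have mapEdgeSet_bijective : Function.Bijective f.mapEdgeSet :=
    (Hom.mapEdgeSet.injective f hf.injective).bijective_of_nat_card_le hcard
  refine ⟨⟨Equiv.ofBijective f hf, fun {u v} => ⟨fun huv => ?_, f.map_adj⟩⟩, fun w => rfl⟩
  obtain ⟨⟨e, he⟩, hmap⟩ := mapEdgeSet_bijective.surjective (⟨s(f u, f v), huv⟩ : G.edgeSet)
  have e_eq : e = s(u, v) :=
    Sym2.map.injective hf.injective ((congrArg Subtype.val hmap).trans (Sym2.map_mk f _ _).symm)
  rwa [e_eq] at he

lemma exists_adj_notMem_of_connected {G : SimpleGraph V} (hconn : G.Connected) {s : Set V}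
    (hs : s.Nonempty) (hs_ne : s ≠ Set.univ) : ∃ u ∈ s, ∃ v ∉ s, G.Adj u v := by
  obtain ⟨u, hu⟩ := hs
  obtain ⟨v, hv⟩ := (Set.ne_univ_iff_exists_notMem s).1 hs_ne
  obtain ⟨p⟩ := hconn.preconnected u v
  obtain ⟨d, -, hd_fst, hd_snd⟩ := p.exists_boundary_dart s hu hv
  exact ⟨d.fst, hd_fst, d.snd, hd_snd, d.adj⟩

lemma exists_adj_prior_extension [Fintype V] {G : SimpleGraph V} (hconn : G.Connected)
    {l k : ℕ} (hl : 0 < l) (hlk : l ≤ k) (hk : k ≤ Fintype.card V) {f : ℕ → V}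
    (hf : Set.InjOn f (Set.Iio l)) :
    ∃ e : ℕ → V, Set.EqOn e f (Set.Iio l) ∧ Set.InjOn e (Set.Iio k) ∧
      ∀ i, l ≤ i → i < k → ∃ j < i, G.Adj (e j) (e i) := by
  induction k, hlk using Nat.le_induction with
  | base => exact ⟨f, fun _ _ => rfl, hf, fun i hli hil => absurd hil hli.not_gt⟩
  | succ k hlk ih =>
    obtain ⟨e, he_eq, he_inj, he_adj⟩ := ih (by omega)
    have image_ne_univ : e '' Set.Iio k ≠ Set.univ := by
      intro h
      have := Set.ncard_image_le (f := e) (Set.finite_Iio k)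
      rw [h, Set.ncard_univ, Nat.card_eq_fintype_card, Set.ncard_Iio_nat] at this
      omega
    obtain ⟨_, ⟨j, hj, rfl⟩, v, hv, hjv⟩ :=
      exists_adj_notMem_of_connected hconn
        ⟨e 0, Set.mem_image_of_mem e (Set.mem_Iio.2 (hl.trans_le hlk))⟩ image_ne_univ
    have update_eq : Set.EqOn (Function.update e k v) e (Set.Iio k) :=
      fun i hi => Function.update_of_ne (ne_of_lt hi) _ _
    refine ⟨Function.update e k v, ?_, ?_, fun i hli hik => ?_⟩
    · exact (update_eq.mono (Set.Iio_subset_Iio hlk)).trans he_eq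
    · rw [← Order.succ_eq_add_one, Order.Iio_succ_eq_insert, Set.injOn_insert (by simp),
        update_eq.injOn_iff, update_eq.image_eq, Function.update_self]
      exact ⟨he_inj, hv⟩
    · rcases Nat.lt_succ_iff_lt_or_eq.1 hik with hik | rfl
      · obtain ⟨j', hj', hadj⟩ := he_adj i hli hik
        refine ⟨j', hj', ?_⟩
        rwa [update_eq hik, update_eq (hj'.trans hik)]
      · refine ⟨j, hj, ?_⟩
        rwa [update_eq hj, Function.update_self]

/-! ### Resistance in the cycle -/

section CycleResistance

variable {l : ℕ}

/-- The effective resistance in the cycle `C_l` between two vertices whose difference is `k`. -/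
noncomputable def cycleResistance (k : Fin l) : ℝ := (k : ℝ) * (l - k) / l

lemma cycleResistance_zero [NeZero l] : cycleResistance (0 : Fin l) = 0 := by
  simp [cycleResistance]

lemma cycleResistance_neg [NeZero l] (k : Fin l) : cycleResistance (-k) = cycleResistance k := by
  by_cases hk : k = 0
  · rw [hk, neg_zero]
  · have hval : ((-k : Fin l) : ℝ) = l - k := by
      rw [Fin.val_neg, if_neg hk, Nat.cast_sub k.is_lt.le]
    rw [cycleResistance, cycleResistance, hval]
    ring

lemma cycleResistance_le (k : Fin l) : cycleResistance k ≤ l - 1 := by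
  have hl : (1 : ℝ) ≤ l := by exact_mod_cast k.pos
  have hk : (k : ℝ) + 1 ≤ l := by exact_mod_cast k.is_lt
  rw [cycleResistance, div_le_iff₀ (by linarith)]
  exact mul_le_mul (by linarith) (by simp) (by linarith) (by linarith)

lemma cycleResistance_add_one [NeZero l] (k : Fin l) :
    cycleResistance (k + 1) = ((k : ℝ) + 1) * (l - (k + 1)) / l := by
  obtain ⟨m, rfl⟩ := Nat.exists_eq_succ_of_ne_zero (NeZero.ne l)
  by_cases hk : k = Fin.last m
  · simp [hk, cycleResistance]
  · rw [cycleResistance, Fin.val_add_one_of_lt (Fin.lt_last_iff_ne_last.2 hk)]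
    push_cast
    ring

lemma two_mul_cycleResistance_sub_sub [NeZero l] (k : Fin l) :
    2 * cycleResistance k - cycleResistance (k + 1) - cycleResistance (k - 1) =
      2 / l - if k = 0 then 2 else 0 := by
  have hl : (l : ℝ) ≠ 0 := NeZero.ne _
  have sub_one_eq : cycleResistance (k - 1) = cycleResistance (-k + 1) := by
    rw [← cycleResistance_neg, neg_sub, sub_eq_neg_add]
  rw [sub_one_eq, cycleResistance_add_one, cycleResistance_add_one, cycleResistance, Fin.val_neg]
  split_ifs with hk
  · subst hk
    simp only [Fin.val_zero]
    field_simp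
    push_cast
    ring
  · rw [Nat.cast_sub k.is_lt.le]
    field_simp
    ring

lemma sum_cycleResistance [NeZero l] : ∑ k : Fin l, cycleResistance k = ((l : ℝ) ^ 2 - 1) / 6 := by
  have sum_range_eq (a : ℝ) (m : ℕ) : ∑ k ∈ range m, (k : ℝ) * (a - k) =
      a * m * (m - 1) / 2 - m * (m - 1) * (2 * m - 1) / 6 := by
    induction m with
    | zero => simp
    | succ m ih => rw [sum_range_succ, ih]; push_cast; ring
  have hl : (l : ℝ) ≠ 0 := NeZero.ne _
  simp only [cycleResistance]
  rw [← sum_div, ← sum_range fun k => (k : ℝ) * (l - k), sum_range_eq]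
  field_simp
  ring

end CycleResistance

/-! ### Extremal values -/

/-- The largest resistance sum `∑ z, r y z` of a vertex of a unicyclic graph on `n` vertices with a
cycle of length `l`, attained at the far end of the lollipop. -/
noncomputable def maxResistanceSum (l n : ℕ) : ℝ :=
  ((l : ℝ) ^ 2 - 1) / 6 + n * (n - 1) / 2 - l * (l - 1) / 2

/-- The largest value of `∑ y, ∑ z, r y z`, attained by the lollipop. -/
noncomputable def maxTotalResistance (l n : ℕ) : ℝ :=
  ((n : ℝ) ^ 3 - 2 * n) / 3 - 2 * n * l ^ 2 / 3 + l ^ 3 / 2 - l ^ 2 + n * l + l / 2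

/-- The largest cover cost, attained on the cycle of the lollipop. -/
noncomputable def maxCoverCost (l n : ℕ) : ℝ :=
  (l : ℝ) ^ 3 / 2 - (4 * (n : ℝ) + 3) * (l : ℝ) ^ 2 / 6
    + (n : ℝ) * (2 * (n : ℝ) ^ 2 + 3 * (n : ℝ) - 1) / 6

lemma maxResistanceSum_self (l : ℕ) : maxResistanceSum l l = ((l : ℝ) ^ 2 - 1) / 6 := by
  rw [maxResistanceSum]; ring

lemma maxResistanceSum_succ (l n : ℕ) :
    maxResistanceSum l (n + 1) = maxResistanceSum l n + n := by
  rw [maxResistanceSum, maxResistanceSum]; push_cast; ring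

lemma maxTotalResistance_succ (l n : ℕ) :
    maxTotalResistance l (n + 1) = maxTotalResistance l n + 2 * (maxResistanceSum l n + n) := by
  rw [maxTotalResistance, maxTotalResistance, maxResistanceSum]; push_cast; ring

lemma maxCoverCost_eq (l n : ℕ) :
    maxCoverCost l n = maxTotalResistance l n + ((n : ℝ) - l) * (n - l + 1) / 2 := by
  rw [maxCoverCost, maxTotalResistance]; ring

lemma sum_range_add_one_sub {l n : ℕ} (hn : l ≤ n) :
    ((∑ i ∈ range n, (i + 1 - l) : ℕ) : ℝ) = ((n : ℝ) - l) * (n - l + 1) / 2 := by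
  induction n, hn using Nat.le_induction with
  | base =>
    rw [sum_eq_zero fun i hi => Nat.sub_eq_zero_of_le (mem_range.1 hi)]
    simp
  | succ n hn ih =>
    rw [sum_range_succ, Nat.cast_add, ih, Nat.cast_sub (by omega)]
    push_cast
    ring

/-! ### Attaching leaves to a cycle -/

/-- A recipe for building unicyclic graphs: start from the cycle on `0, …, l - 1` and attach each
further vertex `i ≥ l` as a leaf at the earlier vertex `parent i`. The values of `parent` below `l`
are irrelevant. -/
structure UnicyclicOrder (l : ℕ) where
  parent : ℕ → ℕ
  parent_lt : ∀ i, l ≤ i → parent i < i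

namespace UnicyclicOrder

open scoped Fin.NatCast

variable {l : ℕ} (T : UnicyclicOrder l)

/-- The edges of the graph built from `T` are the pairs `{i, T.next i}`: the next vertex of the
cycle for `i < l`, and the parent otherwise. -/
def next (i : ℕ) : ℕ := if i < l then (i + 1) % l else T.parent i

/-- The infinite unicyclic graph obtained by carrying out all the steps of `T`. -/
def graph : SimpleGraph ℕ := SimpleGraph.fromRel fun i j => T.next i = j

/-- The unicyclic graph obtained by stopping after the vertices `0, …, n - 1` are in place. -/
def toGraph (n : ℕ) : SimpleGraph (Fin n) := T.graph.comap Fin.val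

/-- The distance from a vertex to the cycle. -/
noncomputable def height (i : ℕ) : ℕ :=
  if h : l ≤ i then height (T.parent i) + 1 else 0
termination_by i
decreasing_by exact T.parent_lt i h

/-- The effective resistance between two vertices: each edge off the cycle adds `1`. -/
noncomputable def resistance [NeZero l] (i j : ℕ) : ℝ :=
  if hij : i < j ∧ l ≤ j then resistance i (T.parent j) + 1
  else if hji : j < i ∧ l ≤ i then resistance (T.parent i) j + 1
  else cycleResistance ((i : Fin l) - (j : Fin l))
termination_by i + j
decreasing_by
  · have := T.parent_lt j hij.2; omega
  · have := T.parent_lt i hji.2; omega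

/-- The Laplacian of `F` plus the degree, at the vertex `u` of the graph on `0, …, m - 1`. Unlike
the Laplacian itself, it is unaffected at old vertices when a leaf `m` with
`F m = F (T.parent m) + 1` is attached. -/
noncomputable def lapAddDeg (m : ℕ) (F : ℕ → ℝ) (u : ℕ) : ℝ :=
  ∑ v ∈ range m, if T.graph.Adj u v then 1 + F u - F v else 0

variable {T} {i j m n u y : ℕ}

lemma next_of_le (hi : l ≤ i) : T.next i = T.parent i := if_neg hi.not_gt

lemma next_of_lt (hi : i < l) : T.next i = if i + 1 = l then 0 else i + 1 := by
  rw [next, if_pos hi]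
  split_ifs with h
  · rw [h, Nat.mod_self]
  · exact Nat.mod_eq_of_lt (by omega)

lemma next_eq_val [NeZero l] (k : Fin l) : T.next k = (k + 1 : Fin l) := by
  rw [next, if_pos k.is_lt, Fin.val_add, Fin.val_one', Nat.add_mod_mod]

lemma next_lt (hl : l ≤ m) (hi : i < m) : T.next i < m := by
  rcases lt_or_ge i l with h | h
  · rw [next_of_lt h]; split_ifs <;> omega
  · rw [next_of_le h]; exact (T.parent_lt i h).trans hi

lemma next_ne_self (hl : 3 ≤ l) (i : ℕ) : T.next i ≠ i := by
  rcases lt_or_ge i l with h | h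
  · rw [next_of_lt h]; split_ifs <;> omega
  · rw [next_of_le h]; exact (T.parent_lt i h).ne

lemma next_next_ne_self (hl : 3 ≤ l) (i : ℕ) : T.next (T.next i) ≠ i := by
  rcases lt_or_ge i l with h | h
  · rw [next_of_lt h]
    split_ifs <;> rw [next_of_lt (by omega)] <;> split_ifs <;> omega
  · rw [next_of_le h]
    exact (next_lt h (T.parent_lt i h)).ne

lemma graph_adj (hl : 3 ≤ l) : T.graph.Adj i j ↔ T.next i = j ∨ T.next j = i := by
  rw [graph, fromRel_adj, and_iff_right_iff_imp]
  rintro h rfl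
  exact next_ne_self hl i (h.elim id id)

lemma graph_adj_iff_eq_parent (hm : l ≤ m) (hu : u < m) :
    T.graph.Adj u m ↔ u = T.parent m := by
  have := next_lt (T := T) hm hu
  rw [graph, fromRel_adj, next_of_le hm]
  omega

lemma toGraph_adj (hl : 3 ≤ l) {i j : Fin n} :
    (T.toGraph n).Adj i j ↔ T.next i = j ∨ T.next j = i :=
  graph_adj hl

lemma degR_toGraph_pos (hl : 3 ≤ l) (hn : l ≤ n) (u : Fin n) : 0 < degR (T.toGraph n) u := by
  rw [degR_eq_degree, Nat.cast_pos]
  exact ((toGraph_adj hl (j := ⟨T.next u, next_lt hn u.is_lt⟩)).2 (.inl rfl)).degree_pos_left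

lemma lapMatrix_toGraph_mulVec (F : ℕ → ℝ) (u : Fin n) :
    ((T.toGraph n).lapMatrix ℝ *ᵥ fun v => F v) u =
      T.lapAddDeg n F u - degR (T.toGraph n) u := by
  rw [lapMatrix_mulVec_eq_sum_ite, lapAddDeg, sum_range, degR, ← sum_boole, ← sum_sub_distrib]
  refine sum_congr rfl fun v _ => ?_
  simp only [toGraph, comap_adj]
  split_ifs <;> ring

lemma lapAddDeg_succ (hm : l ≤ m) (hu : u < m) (F : ℕ → ℝ) :
    T.lapAddDeg (m + 1) F u =
      T.lapAddDeg m F u + if u = T.parent m then 1 + F u - F m else 0 := by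
  simp only [lapAddDeg, sum_range_succ, graph_adj_iff_eq_parent hm hu]

lemma lapAddDeg_succ_self (hm : l ≤ m) (F : ℕ → ℝ) :
    T.lapAddDeg (m + 1) F m = 1 + F m - F (T.parent m) := by
  rw [lapAddDeg, sum_range_succ, if_neg T.graph.irrefl, add_zero,
    sum_eq_single_of_mem (T.parent m) (mem_range.2 (T.parent_lt m hm))]
  · rw [if_pos ((graph_adj_iff_eq_parent hm (T.parent_lt m hm)).2 rfl).symm]
  · intro v hv hne
    rw [if_neg fun h => hne ((graph_adj_iff_eq_parent hm (mem_range.1 hv)).1 h.symm)]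

lemma lapAddDeg_succ_of_eq_add_one (hm : l ≤ m) (hu : u < m) {F : ℕ → ℝ}
    (hF : F m = F (T.parent m) + 1) : T.lapAddDeg (m + 1) F u = T.lapAddDeg m F u := by
  rw [lapAddDeg_succ hm hu, add_eq_left, ite_eq_right_iff]
  rintro rfl
  linarith

lemma height_of_lt (hi : i < l) : T.height i = 0 := by
  rw [height, dif_neg hi.not_ge]

lemma height_of_le (hi : l ≤ i) : T.height i = T.height (T.parent i) + 1 := by
  rw [height, dif_pos hi]

lemma height_eq_zero_iff : T.height i = 0 ↔ i < l := by
  refine ⟨fun h => ?_, height_of_lt⟩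
  by_contra! hi
  rw [height_of_le hi] at h
  omega

/-- The vertices from `l` to `n - 1` form a path, so that `T.toGraph n` is a lollipop. -/
def IsTail (T : UnicyclicOrder l) (n : ℕ) : Prop := ∀ i, l < i → i < n → T.parent i + 1 = i

lemma height_le (i : ℕ) : T.height i ≤ i + 1 - l := by
  induction i using Nat.strong_induction_on with
  | _ i ih =>
    rcases lt_or_ge i l with hi | hi
    · simp [height_of_lt hi]
    · have := T.parent_lt i hi
      have := ih _ this
      rw [height_of_le hi]
      omega

lemma isTail_iff_height_eq : T.IsTail n ↔ ∀ i < n, T.height i = i + 1 - l := by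
  refine ⟨fun hT i hi => ?_, fun hT i hli hi => ?_⟩
  · induction i using Nat.strong_induction_on with
    | _ i ih =>
      rcases lt_trichotomy i l with hli | rfl | hli
      · rw [height_of_lt hli]; omega
      · rw [height_of_le le_rfl, height_of_lt (T.parent_lt i le_rfl)]; omega
      · have parent_add_one := hT i hli hi
        rw [height_of_le hli.le, ih _ (by omega) (by omega)]
        omega
  · have height_i := hT i hi
    have height_parent_le := T.height_le (T.parent i)
    have := T.parent_lt i hli.le
    rw [height_of_le hli.le] at height_i
    omega

lemma sum_height_le (hn : l ≤ n) :
    ((∑ i ∈ range n, T.height i : ℕ) : ℝ) ≤ ((n : ℝ) - l) * (n - l + 1) / 2 := by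
  rw [← sum_range_add_one_sub hn, Nat.cast_le]
  exact sum_le_sum fun i _ => height_le i

lemma sum_height_eq_iff (hn : l ≤ n) :
    ((∑ i ∈ range n, T.height i : ℕ) : ℝ) = ((n : ℝ) - l) * (n - l + 1) / 2 ↔ T.IsTail n := by
  rw [← sum_range_add_one_sub hn, Nat.cast_inj, sum_eq_sum_iff_of_le fun i _ => height_le i,
    isTail_iff_height_eq]
  simp only [mem_range]

section Resistance

variable [NeZero l]

lemma lapAddDeg_cycle (hl : 3 ≤ l) (F : ℕ → ℝ) (k : Fin l) :
    T.lapAddDeg l F k = 2 + (2 * F k - F (k + 1 : Fin l) - F (k - 1 : Fin l)) := by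
  have adj_iff (v : Fin l) : T.graph.Adj k v ↔ v = k + 1 ∨ v = k - 1 := by
    rw [graph_adj hl, next_eq_val, next_eq_val, Fin.val_inj, Fin.val_inj, eq_comm,
      eq_sub_iff_add_eq]
  have add_one_ne_sub_one : k + 1 ≠ k - 1 := by
    intro h
    have h_two := congrArg Fin.val (add_left_cancel (h.trans (sub_eq_add_neg k 1)))
    rw [Fin.val_neg, Fin.val_one', Nat.mod_eq_of_lt (by omega)] at h_two
    split_ifs at h_two
    omega
  have filter_eq : (univ.filter fun v : Fin l => v = k + 1 ∨ v = k - 1) = {k + 1, k - 1} := by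
    ext; simp
  simp only [lapAddDeg, sum_range, adj_iff]
  rw [← sum_filter, filter_eq, sum_pair add_one_ne_sub_one]
  ring

lemma lapAddDeg_height (hl : 3 ≤ l) (hn : l ≤ n) (hu : u < n) :
    T.lapAddDeg n (fun v => T.height v) u = 2 := by
  induction n, hn using Nat.le_induction with
  | base =>
    have := lapAddDeg_cycle (T := T) hl (fun v => T.height v) ⟨u, hu⟩
    simpa [height_of_lt, hu] using this
  | succ n hn ih =>
    have height_n : (T.height n : ℝ) = T.height (T.parent n) + 1 := by
      rw [height_of_le hn]; push_cast; rfl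
    rcases Nat.lt_succ_iff_lt_or_eq.1 hu with hu | rfl
    · rw [lapAddDeg_succ_of_eq_add_one hn hu height_n, ih hu]
    · rw [lapAddDeg_succ_self hn]; linarith

lemma resistance_of_lt (hi : i < l) (hj : j < l) :
    T.resistance i j = cycleResistance ((i : Fin l) - (j : Fin l)) := by
  rw [resistance, dif_neg (by omega), dif_neg (by omega)]

lemma resistance_left (hi : l ≤ i) (hj : j < i) :
    T.resistance i j = T.resistance (T.parent i) j + 1 := by
  rw [resistance, dif_neg (by omega), dif_pos ⟨hj, hi⟩]

lemma resistance_right (hj : l ≤ j) (hi : i < j) :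
    T.resistance i j = T.resistance i (T.parent j) + 1 := by
  rw [resistance, dif_pos ⟨hi, hj⟩]

lemma resistance_self (i : ℕ) : T.resistance i i = 0 := by
  rw [resistance, dif_neg (by omega), dif_neg (by omega), sub_self, cycleResistance_zero]

lemma resistance_comm (i j : ℕ) : T.resistance i j = T.resistance j i := by
  induction hk : i + j using Nat.strong_induction_on generalizing i j with
  | _ k ih =>
    wlog hij : i ≤ j generalizing i j
    · exact (this j i (by omega) (by omega)).symm
    rcases hij.eq_or_lt with rfl | hij
    · rfl
    rcases lt_or_ge j l with hj | hj
    · rw [resistance_of_lt (hij.trans hj) hj, resistance_of_lt hj (hij.trans hj),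
        ← cycleResistance_neg, neg_sub]
    · have := T.parent_lt j hj
      rw [resistance_right hj hij, resistance_left hj hij, ih _ (by omega) i _ rfl]

lemma lapAddDeg_resistance_cycle (hl : 3 ≤ l) (hu : u < l) (hy : y < l) :
    T.lapAddDeg l (fun v => T.resistance v y) u = 2 + 2 / l - if u = y then 2 else 0 := by
  have natCast_eq_iff : (u : Fin l) - (y : Fin l) = 0 ↔ u = y := by
    rw [sub_eq_zero, Fin.ext_iff, Fin.val_cast_of_lt hu, Fin.val_cast_of_lt hy]
  have lap := lapAddDeg_cycle (T := T) hl (fun v => T.resistance v y) u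
  simp only [resistance_of_lt (Fin.is_lt _) hy, Fin.cast_val_eq_self, Fin.val_cast_of_lt hu,
    add_sub_right_comm _ (1 : Fin l), sub_right_comm _ (1 : Fin l)] at lap
  rw [lap, resistance_of_lt hu hy, two_mul_cycleResistance_sub_sub]
  simp only [natCast_eq_iff]
  ring

lemma lapAddDeg_resistance (hl : 3 ≤ l) (hn : l ≤ n) (hu : u < n) (hy : y < n) :
    T.lapAddDeg n (fun v => T.resistance v y) u =
      2 + (if u < l then 2 / (l : ℝ) else 0) - if u = y then 2 else 0 := by
  induction n, hn using Nat.le_induction generalizing u y with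
  | base => rw [lapAddDeg_resistance_cycle hl hu hy, if_pos hu]
  | succ n hn ih =>
    have hparent := T.parent_lt n hn
    rcases Nat.lt_succ_iff_lt_or_eq.1 hu with hu | rfl <;>
      rcases Nat.lt_succ_iff_lt_or_eq.1 hy with hy | rfl
    · rw [lapAddDeg_succ_of_eq_add_one hn hu (resistance_left hn hy), ih hu hy]
    · have shift : T.lapAddDeg y (fun v => T.resistance v y) u =
          T.lapAddDeg y (fun v => T.resistance v (T.parent y)) u := by
        refine sum_congr rfl fun v hv => ?_
        beta_reduce
        rw [resistance_right hn hu, resistance_right hn (mem_range.1 hv)]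
        simp only [← add_assoc, add_sub_add_right_eq_sub]
      rw [lapAddDeg_succ hn hu, shift, ih hu hparent, resistance_self, if_neg hu.ne]
      split_ifs with h_cycle h_leaf h_leaf
      · rw [h_leaf, resistance_right hn hparent, resistance_self]; ring
      · ring
      · rw [h_leaf, resistance_right hn hparent, resistance_self]; ring
      · ring
    · rw [lapAddDeg_succ_self hn, resistance_left hn hy, if_neg hn.not_gt, if_neg hy.ne']
      ring
    · rw [lapAddDeg_succ_self hn, resistance_self, resistance_comm, resistance_left hn hparent,
        resistance_self, if_neg hn.not_gt, if_pos rfl]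
      ring

theorem coverCost_toGraph (hl : 3 ≤ l) (hn : l ≤ n) (x : Fin n) :
    coverCost (T.toGraph n) x = ∑ y ∈ range n, ∑ z ∈ range n, T.resistance y z +
      ((∑ y ∈ range n, T.height y : ℕ) : ℝ) - n * T.height x := by
  rw [coverCost_eq_of_resistance (T.toGraph n) (degR_toGraph_pos hl hn)
    (r := fun y z => T.resistance y z) (h := fun y => T.height y)
    (τ := fun u => 2 + (if (u : ℕ) < l then 2 / (l : ℝ) else 0) - degR (T.toGraph n) u)
    (fun y => resistance_self y) (fun y u => ?_) (fun u => ?_)]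
  · simp [sum_range]
  · rw [lapMatrix_toGraph_mulVec fun v => T.resistance v y,
      lapAddDeg_resistance hl hn u.is_lt y.is_lt]
    simp only [Fin.val_inj]
    ring
  · rw [lapMatrix_toGraph_mulVec fun v => T.height v, lapAddDeg_height hl hn u.is_lt]

lemma resistance_le (hn : l ≤ n) (hi : i < n) (hj : j < n) : T.resistance i j ≤ n - 1 := by
  induction n, hn using Nat.le_induction generalizing i j with
  | base => exact (resistance_of_lt hi hj).trans_le (cycleResistance_le _)
  | succ n hn ih =>
    have hparent := T.parent_lt n hn
    push_cast
    rcases Nat.lt_succ_iff_lt_or_eq.1 hi with hi | rfl <;>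
      rcases Nat.lt_succ_iff_lt_or_eq.1 hj with hj | rfl
    · linarith [ih hi hj]
    · rw [resistance_right hn hi]; linarith [ih hi hparent]
    · rw [resistance_left hn hj]; linarith [ih hparent hj]
    · rw [resistance_self]; simp

lemma sum_resistance_cycle (hy : y < l) :
    ∑ z ∈ range l, T.resistance y z = ((l : ℝ) ^ 2 - 1) / 6 := by
  rw [sum_range, ← sum_cycleResistance, ← (Equiv.subLeft (y : Fin l)).sum_comp cycleResistance]
  refine sum_congr rfl fun z _ => ?_
  rw [resistance_of_lt hy z.is_lt, Fin.cast_val_eq_self, Equiv.subLeft_apply]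

lemma sum_resistance_succ_self (hn : l ≤ n) :
    ∑ z ∈ range (n + 1), T.resistance n z = ∑ z ∈ range n, T.resistance (T.parent n) z + n := by
  rw [sum_range_succ, resistance_self, add_zero,
    sum_congr rfl fun z hz => resistance_left hn (mem_range.1 hz)]
  simp [sum_add_distrib]

lemma sum_resistance_le (hn : l ≤ n) (hy : y < n) :
    ∑ z ∈ range n, T.resistance y z ≤ maxResistanceSum l n := by
  induction n, hn using Nat.le_induction generalizing y with
  | base => rw [sum_resistance_cycle hy, maxResistanceSum_self]
  | succ n hn ih =>
    have hparent := T.parent_lt n hn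
    rw [maxResistanceSum_succ]
    rcases Nat.lt_succ_iff_lt_or_eq.1 hy with hy | rfl
    · rw [sum_range_succ, resistance_right hn hy]
      linarith [ih hy, T.resistance_le hn hy hparent]
    · rw [sum_resistance_succ_self hn]
      linarith [ih hparent]

lemma sum_resistance_parent_of_isTail (hn : l ≤ n) (hT : T.IsTail (n + 1)) :
    ∑ z ∈ range n, T.resistance (T.parent n) z = maxResistanceSum l n := by
  induction n, hn using Nat.le_induction with
  | base => rw [sum_resistance_cycle (T.parent_lt l le_rfl), maxResistanceSum_self]
  | succ n hn ih =>
    have parent_succ : T.parent (n + 1) = n := by have := hT (n + 1); omega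
    rw [parent_succ, sum_resistance_succ_self hn, ih fun i hli hi => hT i hli (by omega),
      maxResistanceSum_succ]

lemma totalResistance_cycle :
    ∑ y ∈ range l, ∑ z ∈ range l, T.resistance y z = maxTotalResistance l l := by
  rw [sum_congr rfl fun y hy => sum_resistance_cycle (mem_range.1 hy), sum_const, card_range,
    nsmul_eq_mul, maxTotalResistance]
  ring

lemma totalResistance_succ (hn : l ≤ n) :
    ∑ y ∈ range (n + 1), ∑ z ∈ range (n + 1), T.resistance y z =
      ∑ y ∈ range n, ∑ z ∈ range n, T.resistance y z +
        2 * (∑ z ∈ range n, T.resistance (T.parent n) z + n) := by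
  rw [sum_range_succ, ← sum_resistance_succ_self hn]
  simp only [sum_range_succ, sum_add_distrib, T.resistance_comm _ n, resistance_self]
  ring

lemma totalResistance_le (hn : l ≤ n) :
    ∑ y ∈ range n, ∑ z ∈ range n, T.resistance y z ≤ maxTotalResistance l n := by
  induction n, hn using Nat.le_induction with
  | base => exact totalResistance_cycle.le
  | succ n hn ih =>
    rw [totalResistance_succ hn, maxTotalResistance_succ]
    linarith [T.sum_resistance_le hn (T.parent_lt n hn)]

lemma totalResistance_of_isTail (hn : l ≤ n) (hT : T.IsTail n) :
    ∑ y ∈ range n, ∑ z ∈ range n, T.resistance y z = maxTotalResistance l n := by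
  induction n, hn using Nat.le_induction with
  | base => exact totalResistance_cycle
  | succ n hn ih =>
    rw [totalResistance_succ hn, maxTotalResistance_succ, sum_resistance_parent_of_isTail hn hT,
      ih fun i hli hi => hT i hli (by omega)]

theorem coverCost_toGraph_le (hl : 3 ≤ l) (hn : l ≤ n) (x : Fin n) :
    coverCost (T.toGraph n) x ≤ maxCoverCost l n := by
  have height_nonneg : (0 : ℝ) ≤ n * T.height x := by positivity
  rw [coverCost_toGraph hl hn, maxCoverCost_eq]
  linarith [T.totalResistance_le hn, T.sum_height_le hn]

theorem coverCost_toGraph_eq_iff (hl : 3 ≤ l) (hn : l ≤ n) (x : Fin n) :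
    coverCost (T.toGraph n) x = maxCoverCost l n ↔ T.IsTail n ∧ (x : ℕ) < l := by
  rw [coverCost_toGraph hl hn, maxCoverCost_eq]
  refine ⟨fun h => ?_, fun ⟨hT, hx⟩ => ?_⟩
  · have height_nonneg : (0 : ℝ) ≤ n * T.height x := by positivity
    have total_le := T.totalResistance_le hn
    have sum_le := T.sum_height_le hn
    have height_eq : (n : ℝ) * T.height x = 0 := by linarith
    have hn_ne : (n : ℝ) ≠ 0 := by norm_cast; omega
    have height_eq_zero : T.height x = 0 := by
      exact_mod_cast (mul_eq_zero.1 height_eq).resolve_left hn_ne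
    exact ⟨(sum_height_eq_iff hn).1 (by linarith), height_eq_zero_iff.1 height_eq_zero⟩
  · rw [totalResistance_of_isTail hn hT, (sum_height_eq_iff hn).2 hT, height_of_lt hx]
    simp

theorem coverCost_toGraph_le_of_lt (hl : 3 ≤ l) (hn : l ≤ n) {x y : Fin n} (hy : (y : ℕ) < l) :
    coverCost (T.toGraph n) x ≤ coverCost (T.toGraph n) y := by
  have height_nonneg : (0 : ℝ) ≤ n * T.height x := by positivity
  rw [coverCost_toGraph hl hn, coverCost_toGraph hl hn, height_of_lt hy]
  push_cast
  linarith

end Resistance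

/-! ### Every unicyclic graph is built leaf by leaf -/

lemma le_card_edgeSet_toGraph (hl : 3 ≤ l) (hn : l ≤ n) :
    n ≤ Nat.card (T.toGraph n).edgeSet := by
  let edge (i : Fin n) : (T.toGraph n).edgeSet :=
    ⟨s(i, ⟨T.next i, next_lt hn i.is_lt⟩), (toGraph_adj hl).2 (.inl rfl)⟩
  have edge_injective : Function.Injective edge := by
    intro i j hij
    rcases Sym2.eq_iff.1 (congrArg Subtype.val hij) with ⟨hij, -⟩ | ⟨hi, hj⟩
    · exact hij
    · have next_i : T.next i = j := congrArg Fin.val hj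
      have next_j : T.next j = i := (congrArg Fin.val hi).symm
      exact absurd (next_i.symm ▸ next_j) (next_next_ne_self hl _)
  simpa using Nat.card_le_card_of_injective edge edge_injective

theorem exists_iso_toGraph [NeZero l] [Fintype V] {G : SimpleGraph V} (hn : Fintype.card V = n)
    (hconn : G.Connected) (huni : esize G = n) (hl : 3 ≤ l) {c : Fin l → V}
    (hinj : Function.Injective c) (hadj : ∀ i, G.Adj (c i) (c (i + 1))) (hln : l ≤ n) :
    ∃ (T : UnicyclicOrder l) (φ : T.toGraph n ≃g G),
      ∀ i : Fin l, φ (i.castLE hln) = c i := by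
  obtain ⟨e, he_eq, he_inj, he_adj⟩ := exists_adj_prior_extension hconn (by omega) hln hn.ge
    (f := fun i => c (i : Fin l)) fun i hi j hj hij => by
      have := congrArg Fin.val (hinj hij)
      rwa [Fin.val_cast_of_lt hi, Fin.val_cast_of_lt hj] at this
  have parent_exists (i : ℕ) : ∃ j, l ≤ i → j < i ∧ (i < n → G.Adj (e j) (e i)) := by
    by_cases hi : l ≤ i ∧ i < n
    · obtain ⟨j, hj, hji⟩ := he_adj i hi.1 hi.2
      exact ⟨j, fun _ => ⟨hj, fun _ => hji⟩⟩
    · exact ⟨0, fun h => ⟨by omega, fun h' => absurd ⟨h, h'⟩ hi⟩⟩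
  choose parent hparent using parent_exists
  let T : UnicyclicOrder l := ⟨parent, fun i hi => (hparent i hi).1⟩
  have e_cycle (k : Fin l) : e k = c k := by
    simpa using he_eq k.is_lt
  have adj_next (i : Fin n) : G.Adj (e i) (e (T.next i)) := by
    rcases lt_or_ge (i : ℕ) l with hi | hi
    · rw [next_eq_val ⟨i, hi⟩, e_cycle, e_cycle ⟨i, hi⟩]
      exact hadj _
    · rw [next_of_le hi]
      exact ((hparent i hi).2 i.is_lt).symm
  have e_injective : Function.Injective fun i : Fin n => e i :=
    fun i j hij => Fin.ext (he_inj i.is_lt j.is_lt hij)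
  obtain ⟨φ, hφ⟩ := exists_iso_of_bijective_of_card_edgeSet_le
    (⟨fun i => e i, fun {i j} hij => ((toGraph_adj hl).1 hij).elim
      (fun h => h ▸ adj_next i) fun h => h ▸ (adj_next j).symm⟩ : T.toGraph n →g G)
    ((Fintype.bijective_iff_injective_and_card _).2 ⟨e_injective, by rw [Fintype.card_fin, hn]⟩)
    (huni.le.trans (le_card_edgeSet_toGraph hl hln))
  exact ⟨T, φ, fun i => (hφ _).trans (e_cycle i)⟩

/-! ### The lollipop -/

/-- The order in which the vertices of the lollipop `P_n^l` are numbered. -/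
def lollipopOrder (l : ℕ) [NeZero l] : UnicyclicOrder l where
  parent i := if i = l then 0 else i - 1
  parent_lt i hi := by
    have := NeZero.pos l
    split_ifs <;> omega

lemma lollipopOrder_isTail (l n : ℕ) [NeZero l] : (lollipopOrder l).IsTail n := by
  intro i hli _
  simp only [lollipopOrder, if_neg hli.ne']
  omega

lemma lollipop_eq_toGraph [NeZero l] (hl : 3 ≤ l) : lollipop n l = (lollipopOrder l).toGraph n := by
  ext i j
  have next_eq (i : ℕ) : (lollipopOrder l).next i =
      if i + 1 < l then i + 1 else if i ≤ l then 0 else i - 1 := by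
    rcases lt_or_ge i l with hi | hi
    · rw [next_of_lt hi]; split_ifs <;> omega
    · rw [next_of_le hi]; simp only [lollipopOrder]; split_ifs <;> omega
  rw [toGraph_adj hl, next_eq, next_eq]
  simp only [lollipop, fromRel_adj, ne_eq, Fin.ext_iff]
  split_ifs <;> omega

lemma nonempty_iso_of_semiconj {T' : UnicyclicOrder l} (hl : 3 ≤ l) {σ : ℕ → ℕ}
    (hσ : Function.Injective σ) (hσ_lt : ∀ i < n, σ i < n)
    (hnext : ∀ i < n, T'.next (σ i) = σ (T.next i)) : Nonempty (T.toGraph n ≃g T'.toGraph n) := by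
  let f (i : Fin n) : Fin n := ⟨σ i, hσ_lt i i.is_lt⟩
  have f_injective : Function.Injective f := fun i j hij => Fin.ext (hσ (congrArg Fin.val hij))
  refine ⟨⟨Equiv.ofBijective f (Finite.injective_iff_bijective.1 f_injective), fun {i j} => ?_⟩⟩
  simp only [Equiv.ofBijective_apply, toGraph_adj hl, f, hnext _ (Fin.is_lt _), hσ.eq_iff]

section Rotate

variable [NeZero l] {a : Fin l}

/-- The rotation of the cycle on `0, …, l - 1` by `a`, fixing the other vertices. -/
def rotate (a : Fin l) (i : ℕ) : ℕ := if i < l then ((i : Fin l) + a : Fin l) else i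

lemma rotate_val (k : Fin l) : rotate a k = (k + a : Fin l) := by
  rw [rotate, if_pos k.is_lt, Fin.cast_val_eq_self]

lemma rotate_of_le (hi : l ≤ i) : rotate a i = i := if_neg hi.not_gt

lemma rotate_lt_iff (hn : l ≤ n) : rotate a i < n ↔ i < n := by
  rw [rotate]
  split_ifs with hi
  · exact iff_of_true ((Fin.is_lt _).trans_le hn) (hi.trans_le hn)
  · rfl

lemma rotate_injective : Function.Injective (rotate a) := by
  intro i j hij
  have lt_iff : i < l ↔ j < l := by
    rw [← rotate_lt_iff (a := a) le_rfl, hij, rotate_lt_iff le_rfl]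
  rcases lt_or_ge i l with hi | hi
  · have val_eq := (rotate_val ⟨i, hi⟩).symm.trans (hij.trans (rotate_val ⟨j, lt_iff.1 hi⟩))
    exact congrArg Fin.val (add_right_cancel (Fin.ext val_eq))
  · rwa [rotate_of_le hi, rotate_of_le (not_lt.1 (lt_iff.not.1 hi.not_gt))] at hij

lemma next_rotate_of_isTail (hT : T.IsTail n) (hi : i < n) :
    T.next (rotate (T.parent l : Fin l) i) =
      rotate (T.parent l : Fin l) ((lollipopOrder l).next i) := by
  rcases lt_trichotomy i l with hil | rfl | hli
  · rw [rotate_val ⟨i, hil⟩, next_eq_val, next_eq_val ⟨i, hil⟩, rotate_val, add_right_comm]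
  · have parent_eq : (lollipopOrder i).parent i = (0 : Fin i) := by simp [lollipopOrder]
    rw [rotate_of_le le_rfl, next_of_le le_rfl, next_of_le le_rfl, parent_eq, rotate_val, zero_add,
      Fin.val_cast_of_lt (T.parent_lt i le_rfl)]
  · have parent_add_one := hT i hli hi
    have lollipop_parent_add_one := lollipopOrder_isTail l n i hli hi
    rw [rotate_of_le hli.le, next_of_le hli.le, next_of_le hli.le, rotate_of_le (by omega)]
    omega

end Rotate

lemma nonempty_lollipop_iso_of_isTail [NeZero l] (hl : 3 ≤ l) (hn : l ≤ n) (hT : T.IsTail n) :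
    Nonempty (lollipop n l ≃g T.toGraph n) := by
  rw [lollipop_eq_toGraph hl]
  exact nonempty_iso_of_semiconj hl rotate_injective (fun i hi => (rotate_lt_iff hn).2 hi)
    fun i hi => next_rotate_of_isTail hT hi

end UnicyclicOrder

open UnicyclicOrder

/-- For an `n`-vertex unicyclic graph `G` with cycle length `l`
and any `x ∈ V(G)`, `CC(x) ≤ l³/2 − (4n+3)l²/6 + n(2n²+3n−1)/6`, with
equality iff `G ≅ P_n^l` and `x` lies on the cycle. -/
theorem coverCost_upper [Fintype V] (G : SimpleGraph V) (n l : ℕ) [NeZero l]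
    (hn : Fintype.card V = n) (hconn : G.Connected) (huni : esize G = n)
    (hl : 3 ≤ l) (c : Fin l → V) (hinj : Function.Injective c)
    (hadj : ∀ i : Fin l, G.Adj (c i) (c (i + 1))) (x : V) :
    coverCost G x ≤ (l : ℝ)^3/2 - (4*(n : ℝ)+3)*(l : ℝ)^2/6
        + (n : ℝ)*(2*(n : ℝ)^2+3*(n : ℝ)-1)/6 ∧
    (coverCost G x = (l : ℝ)^3/2 - (4*(n : ℝ)+3)*(l : ℝ)^2/6
        + (n : ℝ)*(2*(n : ℝ)^2+3*(n : ℝ)-1)/6 ↔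
      Nonempty (lollipop n l ≃g G) ∧ ∃ i : Fin l, c i = x) := by
  have hln : l ≤ n := by
    simpa [hn] using Fintype.card_le_of_injective c hinj
  obtain ⟨T, φ, hφ⟩ := exists_iso_toGraph hn hconn huni hl hinj hadj hln
  change coverCost G x ≤ maxCoverCost l n ∧ (coverCost G x = maxCoverCost l n ↔ _)
  have coverCost_le (v : V) : coverCost G v ≤ maxCoverCost l n := by
    rw [← φ.apply_symm_apply v, coverCost_map_iso]
    exact coverCost_toGraph_le hl hln _
  refine ⟨coverCost_le x, fun hx => ?_, ?_⟩
  · rw [← φ.apply_symm_apply x, coverCost_map_iso, coverCost_toGraph_eq_iff hl hln] at hx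
    obtain ⟨ψ⟩ := nonempty_lollipop_iso_of_isTail hl hln hx.1
    exact ⟨⟨ψ.trans φ⟩, ⟨φ.symm x, hx.2⟩, (hφ _).symm.trans (φ.apply_symm_apply x)⟩
  · rintro ⟨⟨ψ⟩, i, rfl⟩
    let o : Fin n := ⟨0, by omega⟩
    have coverCost_o : coverCost G (ψ o) = maxCoverCost l n := by
      rw [coverCost_map_iso, lollipop_eq_toGraph hl, coverCost_toGraph_eq_iff hl hln]
      exact ⟨lollipopOrder_isTail l n, NeZero.pos l⟩
    refine (coverCost_le _).antisymm (coverCost_o.ge.trans ?_)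
    rw [← φ.apply_symm_apply (ψ o), ← hφ i, coverCost_map_iso φ, coverCost_map_iso φ]
    exact coverCost_toGraph_le_of_lt hl hln i.is_lt
end
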